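/- arXiv:2505.14550 — 2 statements merged into one kernel-verified Lean document; each statement's English description precedes it below -/
import Mathlib

section
/- Step (ii) of the proof of the main theorem (vanishing of the Laplace transform): for every u in D(G), every x in E and every λ > 0, the function t ↦ 𝔄⁺Q(x,t) is Lebesgue integrable on (0,∞) against e^{−λt} dt, and ∫₀^∞ e^{−λt} 𝔄⁺Q(x,t) dt = 0. -/
open MeasureTheory Set Filter Topology
open scoped ZeroAtInfty

/-- The candidate solution `Q(t) = E^x[u(M_{D_t})]`. -/
noncomputable def cand {E : Type*} [TopologicalSpace E]
    (P : ℝ → C₀(E, ℝ) →L[ℝ] C₀(E, ℝ)) (ν : Measure ℝ) (uφ : ℝ → ℝ)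
    (u : C₀(E, ℝ)) (t : ℝ) : C₀(E, ℝ) :=
  if t = 0 then u
  else ∫ h in Set.Ioo 0 t, uφ h • (∫ r in Set.Ioi (t - h), P (r + h) u ∂ν)

/-- The coupled space-time nonlocal operator `𝔄⁺`, applied pointwise to a curve
`F : [0,∞) → C₀(E)`:  `𝔄⁺F(x,t) = ∫₀^∞ ((P_s F((t-s)∨0))(x) - F(t)(x)) ν(ds)`. -/
noncomputable def Aop {E : Type*} [TopologicalSpace E]
    (P : ℝ → C₀(E, ℝ) →L[ℝ] C₀(E, ℝ)) (ν : Measure ℝ)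
    (F : ℝ → C₀(E, ℝ)) (x : E) (t : ℝ) : ℝ :=
  ∫ s in Set.Ioi (0 : ℝ), ((P s (F (max (t - s) 0))) x - (F t) x) ∂ν

/-! `uφ` is the density of the renewal measure `U` of a pure jump process with Lévy measure `ν`.
The renewal identity says that, under `U.prod ν`, the jumps passing over a given level `τ > 0` have
mass `1`, so `Q(τ)` is the mean of the orbit `t ↦ P_t u` at the end point of the jump over `τ`.
Dynkin's formula and the Lipschitz bound on the orbit give absolute convergence.

By Fubini over the pairs (level, jump over it), integrating the integral of `κ` along each jump
gives `∫₀^∞ κ`. Hence the Laplace transform replaces a scalar orbit `g` by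
`w(y) = ∫ discount(r) g(y + r) ν(dr)`, where `discount(r) = ∫₀ʳ e^{-lz} dz`. With
`k(y) = e^{-ly} w(y)`, the increment due to a jump of size `s` has transform
`discount(s) g(s) + ∫ (k(h + s) - k(h)) U(dh)`, and integrating in `s` gives
`w(0) + ∫₀^∞ k' = 0`. -/

namespace Ctrw

section Discount

/-- The discounted length `∫₀ʳ e^{-lz} dz` of a jump of size `r`. -/
noncomputable def discount (l r : ℝ) : ℝ := ∫ z in (0 : ℝ)..r, Real.exp (-(l * z))

theorem continuous_discount (l : ℝ) : Continuous (discount l) :=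
  intervalIntegral.continuous_primitive
    (fun _ _ ↦ Continuous.intervalIntegrable (by fun_prop) _ _) 0

theorem discount_pos {l r : ℝ} (hr : 0 < r) : 0 < discount l r :=
  intervalIntegral.intervalIntegral_pos_of_pos
    (Continuous.intervalIntegrable (by fun_prop) _ _) (fun _ ↦ Real.exp_pos _) hr

theorem setIntegral_Ioo_exp_neg_mul (l a : ℝ) {r : ℝ} (hr : 0 ≤ r) :
    ∫ z in Ioo a (a + r), Real.exp (-(l * z)) = Real.exp (-(l * a)) * discount l r := by
  rw [← integral_Ioc_eq_integral_Ioo, ← intervalIntegral.integral_of_le (by linarith), discount,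
    ← intervalIntegral.integral_const_mul]
  simp_rw [← Real.exp_add, ← neg_add, ← mul_add]
  rw [intervalIntegral.integral_comp_add_left (fun z ↦ Real.exp (-(l * z))), add_zero]

theorem min_one_le_exp_mul_discount {l r : ℝ} (hl : 0 ≤ l) (hr : 0 ≤ r) :
    min 1 r ≤ Real.exp l * discount l r := by
  have hm : 0 ≤ min 1 r := le_min zero_le_one hr
  calc min 1 r = Real.exp l * ∫ _ in (0 : ℝ)..min 1 r, Real.exp (-l) := by
        rw [intervalIntegral.integral_const, sub_zero, smul_eq_mul, mul_left_comm, ← Real.exp_add,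
          add_neg_cancel, Real.exp_zero, mul_one]
    _ ≤ Real.exp l * ∫ z in (0 : ℝ)..min 1 r, Real.exp (-(l * z)) := by
        gcongr
        refine intervalIntegral.integral_mono_on hm
          (Continuous.intervalIntegrable (by fun_prop) _ _)
          (Continuous.intervalIntegrable (by fun_prop) _ _) fun z hz ↦ ?_
        gcongr
        exact mul_le_of_le_one_right hl (hz.2.trans (min_le_left 1 r))
    _ ≤ Real.exp l * discount l r := by
        gcongr
        exact intervalIntegral.integral_mono_interval le_rfl hm (min_le_right 1 r)
          (Eventually.of_forall fun _ ↦ (Real.exp_pos _).le)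
          (Continuous.intervalIntegrable (by fun_prop) _ _)

theorem integrableOn_exp_neg_mul_Ioi {l : ℝ} (hl : 0 < l) :
    IntegrableOn (fun z ↦ Real.exp (-(l * z))) (Ioi 0) := by
  simpa only [neg_mul] using exp_neg_integrableOn_Ioi 0 hl

end Discount

section Straddle

/-- The pairs (position, jump size) for which the jump passes over the level `τ`. -/
def straddle (τ : ℝ) : Set (ℝ × ℝ) := {p | p.1 < τ ∧ τ < p.1 + p.2}

/-- `U` is the renewal measure and `ν` the Lévy measure of an increasing pure jump process started
at `0`. The jumps, listed as (position before the jump, jump size), have intensity `U.prod ν`, and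
the process almost surely passes over each positive level by exactly one jump. -/
structure IsRenewalPair (U ν : Measure ℝ) : Prop where
  left_pos : ∀ᵐ h ∂U, 0 < h
  right_pos : ∀ᵐ r ∂ν, 0 < r
  prod_straddle : ∀ τ > 0, (U.prod ν) (straddle τ) = 1

theorem measurableSet_setOf_mem_straddle :
    MeasurableSet {q : ℝ × (ℝ × ℝ) | q.2 ∈ straddle q.1} :=
  (measurableSet_lt measurable_snd.fst measurable_fst).inter
    (measurableSet_lt measurable_fst (measurable_snd.fst.add measurable_snd.snd))

theorem measurableSet_straddle (τ : ℝ) : MeasurableSet (straddle τ) :=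
  measurable_prodMk_left measurableSet_setOf_mem_straddle

variable {U ν : Measure ℝ}

theorem IsRenewalPair.ae_pos (hUν : IsRenewalPair U ν) :
    ∀ᵐ p ∂U.prod ν, 0 < p.1 ∧ 0 < p.2 :=
  (Measure.quasiMeasurePreserving_fst.ae hUν.left_pos).and
    (Measure.quasiMeasurePreserving_snd.ae hUν.right_pos)

theorem IsRenewalPair.left_ne_zero [SFinite U] (hUν : IsRenewalPair U ν) : U ≠ 0 := by
  rintro rfl
  simpa using hUν.prod_straddle 1 one_pos

theorem IsRenewalPair.right_ne_zero [SFinite ν] (hUν : IsRenewalPair U ν) : ν ≠ 0 := by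
  rintro rfl
  simpa using hUν.prod_straddle 1 one_pos

theorem IsRenewalPair.restrict_Iio_prod_univ [SFinite ν] (hUν : IsRenewalPair U ν) {τ : ℝ}
    (hτ : τ ≤ 0) :
    (U.prod ν).restrict (Iio τ ×ˢ univ) = 0 := by
  rw [Measure.restrict_eq_zero, Measure.prod_prod, measure_eq_zero_iff_ae_notMem.2, zero_mul]
  filter_upwards [hUν.left_pos] with h hh
  exact (hτ.trans hh.le).not_gt

theorem IsRenewalPair.setIntegral_Ioi_indicator_straddle_ae_eq
    {F : Type*} [NormedAddCommGroup F] [NormedSpace ℝ F] (hUν : IsRenewalPair U ν)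
    (Φ : ℝ × (ℝ × ℝ) → F) :
    (fun p ↦ ∫ τ in Ioi 0, {q : ℝ × (ℝ × ℝ) | q.2 ∈ straddle q.1}.indicator Φ (τ, p))
      =ᵐ[U.prod ν] fun p ↦ ∫ τ in Ioo p.1 (p.1 + p.2), Φ (τ, p) := by
  filter_upwards [hUν.ae_pos] with p hp
  have hsub : Ioo p.1 (p.1 + p.2) ⊆ Ioi 0 := fun τ hτ ↦ hp.1.trans hτ.1
  rw [← inter_eq_right.2 hsub, ← setIntegral_indicator measurableSet_Ioo]
  rfl

variable [SFinite U] [SFinite ν] {F : Type*} [NormedAddCommGroup F]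

theorem IsRenewalPair.integrable_indicator_straddle (hUν : IsRenewalPair U ν)
    {Φ : ℝ × (ℝ × ℝ) → F} {b : ℝ → ℝ}
    (hΦ : AEStronglyMeasurable Φ ((volume.restrict (Ioi 0)).prod (U.prod ν)))
    (hb : IntegrableOn b (Ioi 0)) (hΦb : ∀ τ p, ‖Φ (τ, p)‖ ≤ b τ) :
    Integrable ({q : ℝ × (ℝ × ℝ) | q.2 ∈ straddle q.1}.indicator Φ)
      ((volume.restrict (Ioi 0)).prod (U.prod ν)) := by
  have hmeas := hΦ.indicator measurableSet_setOf_mem_straddle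
  refine ⟨hmeas, ?_⟩
  rw [hasFiniteIntegral_iff_enorm, lintegral_prod _ hmeas.enorm]
  refine (setLIntegral_mono_ae hb.aestronglyMeasurable.enorm ?_).trans_lt
    hb.hasFiniteIntegral
  refine Eventually.of_forall fun τ hτ ↦ ?_
  calc ∫⁻ p, ‖{q : ℝ × (ℝ × ℝ) | q.2 ∈ straddle q.1}.indicator Φ (τ, p)‖ₑ ∂U.prod ν
      ≤ ∫⁻ p, (straddle τ).indicator (fun _ ↦ ‖b τ‖ₑ) p ∂U.prod ν := by
        gcongr with p
        rw [enorm_indicator_eq_indicator_enorm]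
        refine indicator_le_indicator' (s := straddle τ) (f := fun p ↦ ‖Φ (τ, p)‖ₑ) fun _ ↦ ?_
        exact enorm_le_iff_norm_le.2 ((hΦb τ p).trans (Real.le_norm_self _))
    _ = ‖b τ‖ₑ := by
        rw [lintegral_indicator_const (measurableSet_straddle τ), hUν.prod_straddle τ hτ, mul_one]

variable [NormedSpace ℝ F]

theorem IsRenewalPair.integrable_setIntegral_Ioo (hUν : IsRenewalPair U ν)
    {Φ : ℝ × (ℝ × ℝ) → F} {b : ℝ → ℝ}
    (hΦ : AEStronglyMeasurable Φ ((volume.restrict (Ioi 0)).prod (U.prod ν)))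
    (hb : IntegrableOn b (Ioi 0)) (hΦb : ∀ τ p, ‖Φ (τ, p)‖ ≤ b τ) :
    Integrable (fun p ↦ ∫ τ in Ioo p.1 (p.1 + p.2), Φ (τ, p)) (U.prod ν) :=
  (hUν.integrable_indicator_straddle hΦ hb hΦb).integral_prod_right.congr
    (hUν.setIntegral_Ioi_indicator_straddle_ae_eq Φ)

theorem IsRenewalPair.integral_setIntegral_Ioo (hUν : IsRenewalPair U ν)
    {Φ : ℝ × (ℝ × ℝ) → F} {b : ℝ → ℝ}
    (hΦ : AEStronglyMeasurable Φ ((volume.restrict (Ioi 0)).prod (U.prod ν)))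
    (hb : IntegrableOn b (Ioi 0)) (hΦb : ∀ τ p, ‖Φ (τ, p)‖ ≤ b τ) :
    ∫ p, (∫ τ in Ioo p.1 (p.1 + p.2), Φ (τ, p)) ∂U.prod ν =
      ∫ τ in Ioi 0, ∫ p in straddle τ, Φ (τ, p) ∂U.prod ν := by
  have hint := hUν.integrable_indicator_straddle hΦ hb hΦb
  rw [← integral_congr_ae (hUν.setIntegral_Ioi_indicator_straddle_ae_eq Φ),
    ← integral_prod_symm _ hint, integral_prod _ hint]
  simp_rw [← integral_indicator (measurableSet_straddle _)]
  rfl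

theorem IsRenewalPair.integrable_setIntegral_Ioo_const (hUν : IsRenewalPair U ν) {κ : ℝ → F}
    (hκ : IntegrableOn κ (Ioi 0)) :
    Integrable (fun p ↦ ∫ τ in Ioo p.1 (p.1 + p.2), κ τ) (U.prod ν) :=
  hUν.integrable_setIntegral_Ioo (Φ := fun q ↦ κ q.1) hκ.aestronglyMeasurable.comp_fst hκ.norm
    fun _ _ ↦ le_rfl

theorem IsRenewalPair.integral_setIntegral_Ioo_const [CompleteSpace F] (hUν : IsRenewalPair U ν)
    {κ : ℝ → F} (hκ : IntegrableOn κ (Ioi 0)) :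
    ∫ p, (∫ τ in Ioo p.1 (p.1 + p.2), κ τ) ∂U.prod ν = ∫ τ in Ioi 0, κ τ := by
  rw [hUν.integral_setIntegral_Ioo (Φ := fun q ↦ κ q.1) hκ.aestronglyMeasurable.comp_fst hκ.norm
    fun _ _ ↦ le_rfl]
  refine setIntegral_congr_fun measurableSet_Ioi fun τ hτ ↦ ?_
  simp only [setIntegral_const, Measure.real, hUν.prod_straddle τ hτ, ENNReal.toReal_one, one_smul]

end Straddle

section LaplaceWeights

variable {U ν : Measure ℝ} [SFinite U] [SFinite ν]

theorem IsRenewalPair.integrable_exp_mul_discount (hUν : IsRenewalPair U ν) {l : ℝ} (hl : 0 < l) :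
    Integrable (fun p : ℝ × ℝ ↦ Real.exp (-(l * p.1)) * discount l p.2) (U.prod ν) := by
  refine (hUν.integrable_setIntegral_Ioo_const (integrableOn_exp_neg_mul_Ioi hl)).congr ?_
  filter_upwards [hUν.ae_pos] with p hp
  exact setIntegral_Ioo_exp_neg_mul l p.1 hp.2.le

theorem IsRenewalPair.integrable_exp_neg_mul (hUν : IsRenewalPair U ν) {l : ℝ} (hl : 0 < l) :
    Integrable (fun h ↦ Real.exp (-(l * h))) U := by
  have := ae_neBot.2 hUν.right_ne_zero
  obtain ⟨r, hint, hr⟩ :=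
    ((hUν.integrable_exp_mul_discount hl).prod_left_ae.and hUν.right_pos).exists
  exact (integrable_mul_const_iff (discount_pos hr).ne'.isUnit _).1 hint

theorem IsRenewalPair.integrable_discount (hUν : IsRenewalPair U ν) {l : ℝ} (hl : 0 < l) :
    Integrable (discount l) ν := by
  have := ae_neBot.2 hUν.left_ne_zero
  obtain ⟨h, hint⟩ := (hUν.integrable_exp_mul_discount hl).prod_right_ae.exists
  exact (integrable_const_mul_iff (Real.exp_pos (-(l * h))).ne'.isUnit _).1 hint

theorem IsRenewalPair.integrable_min_one (hUν : IsRenewalPair U ν) :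
    Integrable (fun r ↦ min 1 r) ν := by
  refine ((hUν.integrable_discount one_pos).const_mul (Real.exp 1)).mono' (by fun_prop) ?_
  filter_upwards [hUν.right_pos] with r hr
  rw [Real.norm_of_nonneg (le_min zero_le_one hr.le)]
  exact min_one_le_exp_mul_discount zero_le_one hr.le

end LaplaceWeights

section BoundedC1

variable {F : Type*} [NormedAddCommGroup F] [NormedSpace ℝ F]

/-- `g` is `C¹` on the half-line `(0, ∞)` with derivative `g'`, with bounds `K` and `L` for `g`
and `g'`. Both functions are extended to `ℝ` as bounded continuous functions. -/
structure IsBoundedC1 (g g' : ℝ → F) (K L : ℝ) : Prop where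
  continuous : Continuous g
  continuous_deriv : Continuous g'
  hasDerivAt : ∀ y > 0, HasDerivAt g (g' y) y
  norm_le : ∀ y, ‖g y‖ ≤ K
  norm_deriv_le : ∀ y, ‖g' y‖ ≤ L

variable {g g' : ℝ → F} {K L : ℝ}

theorem IsBoundedC1.comp_add_const (hg : IsBoundedC1 g g' K L) {s : ℝ} (hs : 0 ≤ s) :
    IsBoundedC1 (fun y ↦ g (y + s)) (fun y ↦ g' (y + s)) K L where
  continuous := by have := hg.continuous; fun_prop
  continuous_deriv := by have := hg.continuous_deriv; fun_prop
  hasDerivAt y hy := (hg.hasDerivAt (y + s) (by linarith)).comp_add_const y s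
  norm_le _ := hg.norm_le _
  norm_deriv_le _ := hg.norm_deriv_le _

theorem IsBoundedC1.integrableOn_indicator_Iio_deriv (hg : IsBoundedC1 g g' K L) (τ : ℝ) :
    IntegrableOn ((Iio τ).indicator g') (Ioi 0) := by
  rw [IntegrableOn, integrable_indicator_iff measurableSet_Iio, IntegrableOn,
    Measure.restrict_restrict measurableSet_Iio, inter_comm, Ioi_inter_Iio]
  exact (hg.continuous_deriv.integrableOn_Icc).mono_set Ioo_subset_Icc_self

theorem IsBoundedC1.setIntegral_Ioo_deriv [CompleteSpace F] (hg : IsBoundedC1 g g' K L) {a b : ℝ}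
    (ha : 0 ≤ a) (hab : a ≤ b) : ∫ y in Ioo a b, g' y = g b - g a := by
  rw [← integral_Ioc_eq_integral_Ioo, ← intervalIntegral.integral_of_le hab]
  exact intervalIntegral.integral_eq_sub_of_hasDerivAt_of_le hab hg.continuous.continuousOn
    (fun y hy ↦ hg.hasDerivAt y (ha.trans_lt hy.1)) (hg.continuous_deriv.intervalIntegrable a b)

theorem IsBoundedC1.norm_sub_le_mul_min_one [CompleteSpace F] (hg : IsBoundedC1 g g' K L) {a s : ℝ}
    (ha : 0 ≤ a) (hs : 0 ≤ s) : ‖g (a + s) - g a‖ ≤ (2 * K + L) * min 1 s := by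
  have hK : 0 ≤ K := (norm_nonneg _).trans (hg.norm_le 0)
  have hL : 0 ≤ L := (norm_nonneg _).trans (hg.norm_deriv_le 0)
  rcases le_total 1 s with h | h
  · rw [min_eq_left h]
    linarith [norm_sub_le (g (a + s)) (g a), hg.norm_le (a + s), hg.norm_le a]
  · have hlip : ‖g (a + s) - g a‖ ≤ L * s := by
      rw [← hg.setIntegral_Ioo_deriv ha (by linarith)]
      refine (norm_setIntegral_le_of_norm_le_const (by simp)
        fun y _ ↦ hg.norm_deriv_le y).trans_eq ?_
      simp [hs]
    rw [min_eq_right h]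
    nlinarith

end BoundedC1

section OvershootMean

variable {F : Type*} [NormedAddCommGroup F]

theorem IsRenewalPair.integrableOn_straddle {U ν : Measure ℝ} (hUν : IsRenewalPair U ν)
    {g : ℝ → F} {K : ℝ} (hg : Continuous g) (hK : ∀ y, ‖g y‖ ≤ K) {τ : ℝ} (hτ : 0 < τ) :
    IntegrableOn (fun p : ℝ × ℝ ↦ g (p.1 + p.2)) (straddle τ) (U.prod ν) :=
  Measure.integrableOn_of_bounded (by simp [hUν.prod_straddle τ hτ])
    (Continuous.aestronglyMeasurable (by fun_prop)) (Eventually.of_forall fun _ ↦ hK _)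

theorem IsRenewalPair.integrable_indicator_straddle_sub_const {U ν : Measure ℝ}
    (hUν : IsRenewalPair U ν) {g : ℝ → F} {K : ℝ} (hg : Continuous g) (hK : ∀ y, ‖g y‖ ≤ K) (c : F)
    {τ : ℝ} (hτ : 0 < τ) :
    Integrable ((straddle τ).indicator fun p ↦ g (p.1 + p.2) - c) (U.prod ν) :=
  (integrable_indicator_iff (measurableSet_straddle τ)).2
    ((hUν.integrableOn_straddle hg hK hτ).sub
      (integrableOn_const (by simp [hUν.prod_straddle τ hτ])))

variable [NormedSpace ℝ F]

/-- The mean of `g` at the end point of the jump that passes over the level `τ`; for `τ ≤ 0` this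
end point is `0`. -/
noncomputable def overshootMean (U ν : Measure ℝ) (g : ℝ → F) (τ : ℝ) : F :=
  if τ ≤ 0 then g 0 else ∫ p in straddle τ, g (p.1 + p.2) ∂U.prod ν

theorem overshootMean_of_nonpos (U ν : Measure ℝ) (g : ℝ → F) {τ : ℝ} (hτ : τ ≤ 0) :
    overshootMean U ν g τ = g 0 :=
  if_pos hτ

theorem overshootMean_of_pos (U ν : Measure ℝ) (g : ℝ → F) {τ : ℝ} (hτ : 0 < τ) :
    overshootMean U ν g τ = ∫ p in straddle τ, g (p.1 + p.2) ∂U.prod ν :=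
  if_neg hτ.not_ge

theorem overshootMean_congr (U ν : Measure ℝ) {g₁ g₂ : ℝ → F} (h : ∀ y ≥ 0, g₁ y = g₂ y) (τ : ℝ) :
    overshootMean U ν g₁ τ = overshootMean U ν g₂ τ := by
  rcases le_or_gt τ 0 with hτ | hτ
  · simp only [overshootMean_of_nonpos _ _ _ hτ, h 0 le_rfl]
  · simp only [overshootMean_of_pos _ _ _ hτ]
    exact setIntegral_congr_fun (measurableSet_straddle τ) fun p hp ↦ h _ (hτ.trans hp.2).le

theorem stronglyMeasurable_overshootMean_add (U ν : Measure ℝ) [SFinite U] [SFinite ν] {g : ℝ → F}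
    (hg : Continuous g) :
    StronglyMeasurable fun q : ℝ × ℝ ↦ overshootMean U ν (fun y ↦ g (y + q.2)) q.1 := by
  unfold overshootMean
  simp_rw [← integral_indicator (measurableSet_straddle _)]
  refine StronglyMeasurable.ite (measurableSet_le measurable_fst measurable_const)
    (Continuous.stronglyMeasurable (by fun_prop)) ?_
  refine StronglyMeasurable.integral_prod_right'
    (f := {q : (ℝ × ℝ) × (ℝ × ℝ) | q.2 ∈ straddle q.1.1}.indicator fun q ↦
      g (q.2.1 + q.2.2 + q.1.2)) ?_
  refine StronglyMeasurable.indicator (Continuous.stronglyMeasurable (by fun_prop)) ?_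
  exact (measurable_fst.fst.prodMk measurable_snd) measurableSet_setOf_mem_straddle

theorem stronglyMeasurable_overshootMean (U ν : Measure ℝ) [SFinite U] [SFinite ν] {g : ℝ → F}
    (hg : Continuous g) : StronglyMeasurable (overshootMean U ν g) := by
  have hslice := (stronglyMeasurable_overshootMean_add U ν hg).comp_measurable
    (measurable_prodMk_right (y := (0 : ℝ)))
  simpa only [Function.comp_def, add_zero] using hslice

variable {U ν : Measure ℝ}

theorem IsRenewalPair.norm_setIntegral_straddle_le (hUν : IsRenewalPair U ν) {g : ℝ → F} {C : ℝ}
    (hC : ∀ y ≥ 0, ‖g y‖ ≤ C) {τ : ℝ} (hτ : 0 < τ) :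
    ‖∫ p in straddle τ, g (p.1 + p.2) ∂U.prod ν‖ ≤ C := by
  simpa [Measure.real, hUν.prod_straddle τ hτ] using norm_setIntegral_le_of_norm_le_const
    (μ := U.prod ν) (f := fun p : ℝ × ℝ ↦ g (p.1 + p.2)) (by simp [hUν.prod_straddle τ hτ])
    fun p (hp : p ∈ straddle τ) ↦ hC _ (hτ.trans hp.2).le

theorem IsRenewalPair.norm_overshootMean_le (hUν : IsRenewalPair U ν) {g : ℝ → F} {K : ℝ}
    (hK : ∀ y ≥ 0, ‖g y‖ ≤ K) (τ : ℝ) : ‖overshootMean U ν g τ‖ ≤ K := by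
  rcases le_or_gt τ 0 with hτ | hτ
  · rw [overshootMean_of_nonpos U ν g hτ]
    exact hK 0 le_rfl
  · rw [overshootMean_of_pos U ν g hτ]
    exact hUν.norm_setIntegral_straddle_le hK hτ

theorem IsRenewalPair.overshootMean_sub (hUν : IsRenewalPair U ν) {g₁ g₂ : ℝ → F} {K₁ K₂ : ℝ}
    (hg₁ : Continuous g₁) (hK₁ : ∀ y, ‖g₁ y‖ ≤ K₁) (hg₂ : Continuous g₂) (hK₂ : ∀ y, ‖g₂ y‖ ≤ K₂)
    (τ : ℝ) :
    overshootMean U ν (fun y ↦ g₁ y - g₂ y) τ =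
      overshootMean U ν g₁ τ - overshootMean U ν g₂ τ := by
  rcases le_or_gt τ 0 with hτ | hτ
  · simp only [overshootMean_of_nonpos _ _ _ hτ]
  · simp only [overshootMean_of_pos _ _ _ hτ]
    exact integral_sub (hUν.integrableOn_straddle hg₁ hK₁ hτ) (hUν.integrableOn_straddle hg₂ hK₂ hτ)

variable {g g' : ℝ → F} {K L : ℝ} [CompleteSpace F]

/-- A jump that starts below `τ` is followed only up to `τ`, and the straddling jump continues
beyond `τ`. -/
theorem IsBoundedC1.indicator_sub_eq (hg : IsBoundedC1 g g' K L) {τ : ℝ} {p : ℝ × ℝ}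
    (hp : 0 < p.1 ∧ 0 < p.2) :
    (Iio τ ×ˢ univ).indicator (fun p : ℝ × ℝ ↦ g (p.1 + p.2) - g p.1) p =
      (∫ y in Ioo p.1 (p.1 + p.2), (Iio τ).indicator g' y) +
        (straddle τ).indicator (fun p ↦ g (p.1 + p.2) - g τ) p := by
  rw [setIntegral_indicator measurableSet_Iio, Ioo_inter_Iio]
  rcases le_or_gt τ p.1 with hτ | hτ
  · rw [Ioo_eq_empty (by simp [hτ]), setIntegral_empty, indicator_of_notMem (by simp [hτ]),
      indicator_of_notMem fun h ↦ hτ.not_gt h.1, zero_add]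
  · rw [indicator_of_mem (by simp [hτ]),
      hg.setIntegral_Ioo_deriv hp.1.le (le_min (by linarith) hτ.le)]
    rcases le_or_gt (p.1 + p.2) τ with hle | hlt
    · rw [min_eq_left hle, indicator_of_notMem fun h ↦ hle.not_gt h.2, add_zero]
    · rw [min_eq_right hlt.le, indicator_of_mem (show p ∈ straddle τ from ⟨hτ, hlt⟩)]
      abel

variable [SFinite U] [SFinite ν]

theorem IsRenewalPair.integrableOn_sub_Iio_prod (hUν : IsRenewalPair U ν)
    (hg : IsBoundedC1 g g' K L) (τ : ℝ) :
    IntegrableOn (fun p ↦ g (p.1 + p.2) - g p.1) (Iio τ ×ˢ univ) (U.prod ν) := by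
  rcases le_or_gt τ 0 with hτ | hτ
  · rw [IntegrableOn, hUν.restrict_Iio_prod_univ hτ]
    exact integrable_zero_measure
  · refine (integrable_indicator_iff (measurableSet_Iio.prod .univ)).1 ?_
    refine ((hUν.integrable_setIntegral_Ioo_const (hg.integrableOn_indicator_Iio_deriv τ)).add
      (hUν.integrable_indicator_straddle_sub_const hg.continuous hg.norm_le (g τ) hτ)).congr ?_
    filter_upwards [hUν.ae_pos] with p hp
    exact (hg.indicator_sub_eq hp).symm

/-- Dynkin's formula for the jump process. -/
theorem IsRenewalPair.overshootMean_sub_apply_zero (hUν : IsRenewalPair U ν)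
    (hg : IsBoundedC1 g g' K L) (τ : ℝ) :
    overshootMean U ν g τ - g 0 = ∫ p in Iio τ ×ˢ univ, (g (p.1 + p.2) - g p.1) ∂U.prod ν := by
  rcases le_or_gt τ 0 with hτ | hτ
  · rw [hUν.restrict_Iio_prod_univ hτ, integral_zero_measure, overshootMean_of_nonpos U ν g hτ,
      sub_self]
  have hκ := hg.integrableOn_indicator_Iio_deriv τ
  have hbelow : ∫ y in Ioi 0, (Iio τ).indicator g' y = g τ - g 0 := by
    rw [setIntegral_indicator measurableSet_Iio, Ioi_inter_Iio,
      hg.setIntegral_Ioo_deriv le_rfl hτ.le]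
  have hbeyond : ∫ p in straddle τ, (g (p.1 + p.2) - g τ) ∂U.prod ν =
      overshootMean U ν g τ - g τ := by
    rw [integral_sub (hUν.integrableOn_straddle hg.continuous hg.norm_le hτ)
      (integrableOn_const (by simp [hUν.prod_straddle τ hτ])), setIntegral_const, Measure.real,
      hUν.prod_straddle τ hτ, ENNReal.toReal_one, one_smul, overshootMean_of_pos U ν g hτ]
  rw [← integral_indicator (measurableSet_Iio.prod .univ),
    integral_congr_ae (hUν.ae_pos.mono fun p hp ↦ hg.indicator_sub_eq hp),
    integral_add (hUν.integrable_setIntegral_Ioo_const hκ)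
      (hUν.integrable_indicator_straddle_sub_const hg.continuous hg.norm_le (g τ) hτ),
    hUν.integral_setIntegral_Ioo_const hκ, integral_indicator (measurableSet_straddle τ), hbelow,
    hbeyond]
  abel

theorem IsRenewalPair.enorm_overshootMean_sub_le (hUν : IsRenewalPair U ν)
    (hg : IsBoundedC1 g g' K L) {σ τ : ℝ} (hστ : σ ≤ τ) :
    ‖overshootMean U ν g σ - overshootMean U ν g τ‖ₑ ≤
      U (Ico σ τ) * ∫⁻ r, ENNReal.ofReal ((2 * K + L) * min 1 r) ∂ν := by
  have hdiff : overshootMean U ν g τ - overshootMean U ν g σ =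
      ∫ p in Ico σ τ ×ˢ univ, (g (p.1 + p.2) - g p.1) ∂U.prod ν := by
    have hset : Ico σ τ ×ˢ (univ : Set ℝ) = Iio τ ×ˢ univ \ Iio σ ×ˢ univ := by
      ext p
      simp [and_comm]
    rw [hset, setIntegral_sdiff (measurableSet_Iio.prod .univ) (hUν.integrableOn_sub_Iio_prod hg τ)
      (prod_mono_left (Iio_subset_Iio hστ)),
      ← hUν.overshootMean_sub_apply_zero hg, ← hUν.overshootMean_sub_apply_zero hg,
      sub_sub_sub_cancel_right]
  calc ‖overshootMean U ν g σ - overshootMean U ν g τ‖ₑ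
      ≤ ∫⁻ p in Ico σ τ ×ˢ univ, ‖g (p.1 + p.2) - g p.1‖ₑ ∂U.prod ν := by
        rw [enorm_sub_rev, hdiff]
        exact enorm_integral_le_lintegral_enorm _
    _ ≤ ∫⁻ p in Ico σ τ ×ˢ univ, ENNReal.ofReal ((2 * K + L) * min 1 p.2) ∂U.prod ν := by
        refine lintegral_mono_ae (ae_restrict_of_ae ?_)
        filter_upwards [hUν.ae_pos] with p hp
        rw [← ofReal_norm]
        exact ENNReal.ofReal_le_ofReal (hg.norm_sub_le_mul_min_one hp.1.le hp.2.le)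
    _ = U (Ico σ τ) * ∫⁻ r, ENNReal.ofReal ((2 * K + L) * min 1 r) ∂ν := by
        rw [← Measure.prod_restrict, Measure.restrict_univ, lintegral_prod _ (by fun_prop)]
        simp only [lintegral_const, Measure.restrict_apply_univ, mul_comm]

end OvershootMean

section JumpIncrement

/-- Starting from `0` at level `t > 0`, the change of the overshoot mean of `g` caused by a jump of
size `s`, which moves the argument of `g` by `s` and lowers the level to `t - s`. -/
noncomputable def jumpIncrement {F : Type*} [NormedAddCommGroup F] [NormedSpace ℝ F]
    (U ν : Measure ℝ) (g : ℝ → F) (t s : ℝ) : F :=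
  overshootMean U ν (fun y ↦ g (y + s)) (t - s) - overshootMean U ν g t

theorem lintegral_exp_mul_measure_Ico (U : Measure ℝ) [SFinite U] (l : ℝ) {s : ℝ} (hs : 0 ≤ s) :
    ∫⁻ t, ENNReal.ofReal (Real.exp (-(l * t))) * U (Ico (t - s) t) =
      ∫⁻ h, ENNReal.ofReal (Real.exp (-(l * h)) * discount l s) ∂U := by
  let e : ℝ → ENNReal := fun t ↦ ENNReal.ofReal (Real.exp (-(l * t)))
  have hmeas : Measurable fun q : ℝ × ℝ ↦ (Ioc q.2 (q.2 + s)).indicator e q.1 := by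
    refine Measurable.indicator (f := fun q : ℝ × ℝ ↦ e q.1)
      (s := {q : ℝ × ℝ | q.1 ∈ Ioc q.2 (q.2 + s)}) (by fun_prop) ?_
    exact (measurableSet_lt measurable_snd measurable_fst).inter
      (measurableSet_le measurable_fst (measurable_snd.add_const s))
  calc ∫⁻ t, e t * U (Ico (t - s) t)
      = ∫⁻ t, ∫⁻ h, (Ioc h (h + s)).indicator e t ∂U := by
        refine lintegral_congr fun t ↦ ?_
        rw [← lintegral_indicator_const measurableSet_Ico]
        refine lintegral_congr fun h ↦ ?_
        simp only [indicator, mem_Ioc, mem_Ico, sub_le_iff_le_add, and_comm]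
    _ = ∫⁻ h, (∫⁻ t, (Ioc h (h + s)).indicator e t) ∂U :=
        lintegral_lintegral_swap hmeas.aemeasurable
    _ = ∫⁻ h, ENNReal.ofReal (Real.exp (-(l * h)) * discount l s) ∂U := by
        refine lintegral_congr fun h ↦ ?_
        have hint : IntegrableOn (fun t ↦ Real.exp (-(l * t))) (Ioo h (h + s)) :=
          (Continuous.integrableOn_Icc (by fun_prop)).mono_set Ioo_subset_Icc_self
        rw [lintegral_indicator measurableSet_Ioc, ← restrict_Ioo_eq_restrict_Ioc,
          ← setIntegral_Ioo_exp_neg_mul l h hs,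
          ofReal_integral_eq_lintegral_ofReal hint
            (Eventually.of_forall fun _ ↦ (Real.exp_pos _).le)]

variable {F : Type*} [NormedAddCommGroup F] [NormedSpace ℝ F] {U ν : Measure ℝ}
  [SFinite U] [SFinite ν] {g g' : ℝ → F} {K L : ℝ}

theorem stronglyMeasurable_jumpIncrement (U ν : Measure ℝ) [SFinite U] [SFinite ν]
    (hg : Continuous g) :
    StronglyMeasurable fun q : ℝ × ℝ ↦ jumpIncrement U ν g q.1 q.2 :=
  ((stronglyMeasurable_overshootMean_add U ν hg).comp_measurable
    ((measurable_fst.sub measurable_snd).prodMk measurable_snd)).sub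
    ((stronglyMeasurable_overshootMean U ν hg).comp_measurable measurable_fst)

variable [CompleteSpace F]

theorem IsRenewalPair.enorm_jumpIncrement_le (hUν : IsRenewalPair U ν) (hg : IsBoundedC1 g g' K L)
    (t : ℝ) {s : ℝ} (hs : 0 ≤ s) :
    ‖jumpIncrement U ν g t s‖ₑ ≤ ENNReal.ofReal ((2 * K + L) * min 1 s) +
      U (Ico (t - s) t) * ∫⁻ r, ENNReal.ofReal ((2 * K + L) * min 1 r) ∂ν := by
  have hgs := hg.comp_add_const hs
  have hmove : ‖overshootMean U ν (fun y ↦ g (y + s)) (t - s) - overshootMean U ν g (t - s)‖ₑ ≤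
      ENNReal.ofReal ((2 * K + L) * min 1 s) := by
    rw [← hUν.overshootMean_sub hgs.continuous hgs.norm_le hg.continuous hg.norm_le, ← ofReal_norm]
    exact ENNReal.ofReal_le_ofReal
      (hUν.norm_overshootMean_le (fun y hy ↦ hg.norm_sub_le_mul_min_one hy hs) _)
  rw [jumpIncrement, ← sub_add_sub_cancel _ (overshootMean U ν g (t - s))]
  exact (enorm_add_le _ _).trans
    (add_le_add hmove (hUν.enorm_overshootMean_sub_le hg (sub_le_self t hs)))

theorem IsRenewalPair.lintegral_enorm_exp_smul_jumpIncrement_le (hUν : IsRenewalPair U ν)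
    (hg : IsBoundedC1 g g' K L) (l : ℝ) {s : ℝ} (hs : 0 ≤ s) :
    ∫⁻ t in Ioi 0, ‖Real.exp (-(l * t)) • jumpIncrement U ν g t s‖ₑ ≤
      (∫⁻ t in Ioi 0, ENNReal.ofReal (Real.exp (-(l * t)))) *
          ENNReal.ofReal ((2 * K + L) * min 1 s) +
        (∫⁻ h, ENNReal.ofReal (Real.exp (-(l * h))) ∂U) * ENNReal.ofReal (discount l s) *
          ∫⁻ r, ENNReal.ofReal ((2 * K + L) * min 1 r) ∂ν := by
  let e : ℝ → ENNReal := fun t ↦ ENNReal.ofReal (Real.exp (-(l * t)))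
  let A := ENNReal.ofReal ((2 * K + L) * min 1 s)
  let B := ∫⁻ r, ENNReal.ofReal ((2 * K + L) * min 1 r) ∂ν
  have hB : B ≠ ⊤ := (hUν.integrable_min_one.const_mul (2 * K + L)).lintegral_lt_top.ne
  calc ∫⁻ t in Ioi 0, ‖Real.exp (-(l * t)) • jumpIncrement U ν g t s‖ₑ
      ≤ ∫⁻ t in Ioi 0, (e t * A + e t * U (Ico (t - s) t) * B) := by
        refine lintegral_mono fun t ↦ ?_
        rw [enorm_smul, Real.enorm_of_nonneg (Real.exp_pos _).le, mul_assoc (e t), ← mul_add]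
        gcongr
        exact hUν.enorm_jumpIncrement_le hg t hs
    _ = (∫⁻ t in Ioi 0, e t) * A + (∫⁻ t in Ioi 0, e t * U (Ico (t - s) t)) * B := by
        rw [lintegral_add_left (by fun_prop), lintegral_mul_const _ (by fun_prop),
          lintegral_mul_const' _ _ hB]
    _ ≤ (∫⁻ t in Ioi 0, e t) * A + (∫⁻ t, e t * U (Ico (t - s) t)) * B := by
        gcongr
        exact Measure.restrict_le_self
    _ = (∫⁻ t in Ioi 0, e t) * A + (∫⁻ h, e h ∂U) * ENNReal.ofReal (discount l s) * B := by
        rw [lintegral_exp_mul_measure_Ico U l hs]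
        simp_rw [ENNReal.ofReal_mul (Real.exp_pos _).le]
        rw [lintegral_mul_const _ (by fun_prop)]

theorem IsRenewalPair.integrable_exp_smul_jumpIncrement (hUν : IsRenewalPair U ν)
    (hg : IsBoundedC1 g g' K L) {l : ℝ} (hl : 0 < l) :
    Integrable (fun q : ℝ × ℝ ↦ Real.exp (-(l * q.1)) • jumpIncrement U ν g q.1 q.2)
      ((volume.restrict (Ioi 0)).prod ν) := by
  have hmeas : AEStronglyMeasurable
      (fun q : ℝ × ℝ ↦ Real.exp (-(l * q.1)) • jumpIncrement U ν g q.1 q.2)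
      ((volume.restrict (Ioi 0)).prod ν) :=
    ((Continuous.stronglyMeasurable (by fun_prop)).smul
      (stronglyMeasurable_jumpIncrement U ν hg.continuous)).aestronglyMeasurable
  refine ⟨hmeas, ?_⟩
  rw [hasFiniteIntegral_iff_enorm, lintegral_prod_symm _ hmeas.enorm]
  refine (lintegral_mono_ae (hUν.right_pos.mono fun s hs ↦
    hUν.lintegral_enorm_exp_smul_jumpIncrement_le hg l hs.le)).trans_lt ?_
  have hexp := (integrableOn_exp_neg_mul_Ioi hl).lintegral_lt_top
  have hU := (hUν.integrable_exp_neg_mul hl).lintegral_lt_top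
  have hν := (hUν.integrable_min_one.const_mul (2 * K + L)).lintegral_lt_top
  have hdisc := (hUν.integrable_discount hl).lintegral_lt_top
  have := (continuous_discount l).measurable
  rw [lintegral_add_left (by fun_prop), lintegral_const_mul _ (by fun_prop),
    lintegral_mul_const _ (by fun_prop), lintegral_const_mul _ (by fun_prop)]
  finiteness

end JumpIncrement

section LaplaceTransform

variable {F : Type*} [NormedAddCommGroup F] [NormedSpace ℝ F]

theorem integrableOn_exp_smul_of_norm_le {φ : ℝ → F} {K l : ℝ} (hφ : StronglyMeasurable φ)
    (hK : ∀ t, ‖φ t‖ ≤ K) (hl : 0 < l) :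
    IntegrableOn (fun t ↦ Real.exp (-(l * t)) • φ t) (Ioi 0) :=
  (integrableOn_exp_neg_mul_Ioi hl).smul_bdd K hφ.aestronglyMeasurable (Eventually.of_forall hK)

theorem setIntegral_Ioi_exp_smul_comp_sub [CompleteSpace F] {φ : ℝ → F} {K l s : ℝ} {c : F}
    (hφ : StronglyMeasurable φ) (hK : ∀ t, ‖φ t‖ ≤ K) (hc : ∀ t ≤ 0, φ t = c) (hl : 0 < l)
    (hs : 0 ≤ s) :
    ∫ t in Ioi 0, Real.exp (-(l * t)) • φ (t - s) =
      discount l s • c + Real.exp (-(l * s)) • ∫ t in Ioi 0, Real.exp (-(l * t)) • φ t := by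
  have hint : IntegrableOn (fun t ↦ Real.exp (-(l * t)) • φ (t - s)) (Ioi 0) :=
    integrableOn_exp_smul_of_norm_le (hφ.comp_measurable (measurable_sub_const s))
      (fun t ↦ hK (t - s)) hl
  have hshort : ∫ t in Ioc 0 s, Real.exp (-(l * t)) • φ (t - s) = discount l s • c := by
    rw [setIntegral_congr_fun (g := fun t ↦ Real.exp (-(l * t)) • c) measurableSet_Ioc
      fun t ht ↦ by simp only [hc (t - s) (sub_nonpos.2 ht.2)]]
    rw [integral_smul_const, discount, intervalIntegral.integral_of_le hs]
  have hlong : ∫ t in Ioi s, Real.exp (-(l * t)) • φ (t - s) =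
      Real.exp (-(l * s)) • ∫ t in Ioi 0, Real.exp (-(l * t)) • φ t := by
    rw [← (measurePreserving_add_right volume s).setIntegral_preimage_emb
      (measurableEmbedding_addRight s), preimage_add_const_Ioi, sub_self, ← integral_smul]
    refine integral_congr_ae (Eventually.of_forall fun t ↦ ?_)
    simp only [add_sub_cancel_right, smul_smul, ← Real.exp_add]
    ring_nf
  rw [← hshort, ← hlong, ← setIntegral_union Ioc_disjoint_Ioi_same measurableSet_Ioi
    (hint.mono_set Ioc_subset_Ioi_self) (hint.mono_set (Ioi_subset_Ioi hs)),
    Ioc_union_Ioi_eq_Ioi hs]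

/-- The mean of `g` after one jump from `y`, each jump size `r` being weighted by the discounted
length `discount l r`. -/
noncomputable def smoothing (ν : Measure ℝ) (l : ℝ) (g : ℝ → F) (y : ℝ) : F :=
  ∫ r, discount l r • g (y + r) ∂ν

theorem smoothing_comp_add_const (ν : Measure ℝ) (l : ℝ) (g : ℝ → F) (s y : ℝ) :
    smoothing ν l (fun z ↦ g (z + s)) y = smoothing ν l g (y + s) := by
  simp only [smoothing, add_right_comm]

variable {U ν : Measure ℝ} {g g' : ℝ → F} {K L l : ℝ}

theorem integrable_discount_smul (hdisc : Integrable (discount l) ν) (hg : Continuous g)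
    (hK : ∀ y, ‖g y‖ ≤ K) (y : ℝ) : Integrable (fun r ↦ discount l r • g (y + r)) ν :=
  hdisc.smul_bdd K (Continuous.aestronglyMeasurable (by fun_prop))
    (Eventually.of_forall fun _ ↦ hK _)

theorem continuous_smoothing (hdisc : Integrable (discount l) ν) (hg : Continuous g)
    (hK : ∀ y, ‖g y‖ ≤ K) : Continuous (smoothing ν l g) := by
  refine continuous_of_dominated
    (fun y ↦ (integrable_discount_smul hdisc hg hK y).aestronglyMeasurable)
    (fun y ↦ Eventually.of_forall fun r ↦ ?_) (hdisc.norm.mul_const K)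
    (Eventually.of_forall fun r ↦ by fun_prop)
  rw [norm_smul]
  gcongr
  exact hK _

theorem norm_smoothing_le (hdisc : Integrable (discount l) ν) (hK : ∀ y, ‖g y‖ ≤ K) (y : ℝ) :
    ‖smoothing ν l g y‖ ≤ (∫ r, ‖discount l r‖ ∂ν) * K := by
  rw [← integral_mul_const]
  refine norm_integral_le_of_norm_le (hdisc.norm.mul_const K) (Eventually.of_forall fun r ↦ ?_)
  rw [norm_smul]
  gcongr
  exact hK _

theorem isBoundedC1_smoothing (hν : ∀ᵐ r ∂ν, 0 < r) (hdisc : Integrable (discount l) ν)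
    (hg : IsBoundedC1 g g' K L) :
    IsBoundedC1 (smoothing ν l g) (smoothing ν l g') ((∫ r, ‖discount l r‖ ∂ν) * K)
      ((∫ r, ‖discount l r‖ ∂ν) * L) where
  continuous := continuous_smoothing hdisc hg.continuous hg.norm_le
  continuous_deriv := continuous_smoothing hdisc hg.continuous_deriv hg.norm_deriv_le
  norm_le := norm_smoothing_le hdisc hg.norm_le
  norm_deriv_le := norm_smoothing_le hdisc hg.norm_deriv_le
  hasDerivAt y hy := by
    refine (hasDerivAt_integral_of_dominated_loc_of_deriv_le (s := Ioi 0)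
      (F' := fun x r ↦ discount l r • g' (x + r)) (Ioi_mem_nhds hy)
      (Eventually.of_forall fun x ↦
        (integrable_discount_smul hdisc hg.continuous hg.norm_le x).aestronglyMeasurable)
      (integrable_discount_smul hdisc hg.continuous hg.norm_le y)
      (integrable_discount_smul hdisc hg.continuous_deriv hg.norm_deriv_le y).aestronglyMeasurable
      (Eventually.of_forall fun r x _ ↦ ?_) (hdisc.norm.mul_const L) ?_).2
    · rw [norm_smul]
      gcongr
      exact hg.norm_deriv_le _
    · filter_upwards [hν] with r hr x hx
      exact ((hg.hasDerivAt (x + r) (add_pos hx hr)).comp_add_const x r).const_smul _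

variable [SFinite U] [SFinite ν]

theorem IsRenewalPair.integrable_exp_smul_smoothing (hUν : IsRenewalPair U ν) (hl : 0 < l)
    (hg : Continuous g) (hK : ∀ y, ‖g y‖ ≤ K) (s : ℝ) :
    Integrable (fun h ↦ Real.exp (-(l * h)) • smoothing ν l g (h + s)) U :=
  have hdisc := hUν.integrable_discount hl
  (hUν.integrable_exp_neg_mul hl).smul_bdd _
    ((continuous_smoothing hdisc hg hK).comp (continuous_add_const s)).aestronglyMeasurable
    (Eventually.of_forall fun h ↦ norm_smoothing_le hdisc hK (h + s))

theorem IsRenewalPair.setIntegral_exp_smul_overshootMean [CompleteSpace F]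
    (hUν : IsRenewalPair U ν) (hl : 0 < l) (hg : Continuous g) (hK : ∀ y, ‖g y‖ ≤ K) :
    ∫ t in Ioi 0, Real.exp (-(l * t)) • overshootMean U ν g t =
      ∫ h, Real.exp (-(l * h)) • smoothing ν l g h ∂U := by
  have hint : Integrable (fun p : ℝ × ℝ ↦ (Real.exp (-(l * p.1)) * discount l p.2) • g (p.1 + p.2))
      (U.prod ν) :=
    (hUν.integrable_exp_mul_discount hl).smul_bdd K
      (Continuous.aestronglyMeasurable (by fun_prop)) (Eventually.of_forall fun _ ↦ hK _)
  calc ∫ t in Ioi 0, Real.exp (-(l * t)) • overshootMean U ν g t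
      = ∫ t in Ioi 0, ∫ p in straddle t, Real.exp (-(l * t)) • g (p.1 + p.2) ∂U.prod ν := by
        refine setIntegral_congr_fun measurableSet_Ioi fun t ht ↦ ?_
        simp only [overshootMean_of_pos U ν g ht, integral_smul]
    _ = ∫ p, (∫ t in Ioo p.1 (p.1 + p.2), Real.exp (-(l * t)) • g (p.1 + p.2)) ∂U.prod ν := by
        refine (hUν.integral_setIntegral_Ioo
          (Φ := fun q ↦ Real.exp (-(l * q.1)) • g (q.2.1 + q.2.2))
          (Continuous.aestronglyMeasurable (by fun_prop))
          ((integrableOn_exp_neg_mul_Ioi hl).mul_const K) fun τ p ↦ ?_).symm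
        rw [norm_smul, Real.norm_of_nonneg (Real.exp_pos _).le]
        gcongr
        exact hK _
    _ = ∫ p, (Real.exp (-(l * p.1)) * discount l p.2) • g (p.1 + p.2) ∂U.prod ν := by
        refine integral_congr_ae (hUν.ae_pos.mono fun p hp ↦ ?_)
        simp only [integral_smul_const, setIntegral_Ioo_exp_neg_mul l p.1 hp.2.le]
    _ = ∫ h, Real.exp (-(l * h)) • smoothing ν l g h ∂U := by
        rw [integral_prod _ hint]
        simp only [smoothing, mul_smul, integral_smul]

variable [CompleteSpace F]

theorem IsRenewalPair.setIntegral_exp_smul_jumpIncrement (hUν : IsRenewalPair U ν) (hl : 0 < l)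
    (hg : Continuous g) (hK : ∀ y, ‖g y‖ ≤ K) {s : ℝ} (hs : 0 ≤ s) :
    ∫ t in Ioi 0, Real.exp (-(l * t)) • jumpIncrement U ν g t s =
      discount l s • g s + ∫ h, (Real.exp (-(l * (h + s))) • smoothing ν l g (h + s) -
        Real.exp (-(l * h)) • smoothing ν l g h) ∂U := by
  have hgs : Continuous fun y ↦ g (y + s) := by fun_prop
  have hmeas := stronglyMeasurable_overshootMean U ν hg
  have hmeas_s := stronglyMeasurable_overshootMean U ν hgs
  have hbound := hUν.norm_overshootMean_le fun y _ ↦ hK y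
  have hbound_s := hUν.norm_overshootMean_le fun y _ ↦ hK (y + s)
  have hint : IntegrableOn (fun t ↦ Real.exp (-(l * t)) • overshootMean U ν g t) (Ioi 0) :=
    integrableOn_exp_smul_of_norm_le hmeas hbound hl
  have hint_s : IntegrableOn
      (fun t ↦ Real.exp (-(l * t)) • overshootMean U ν (fun y ↦ g (y + s)) (t - s)) (Ioi 0) :=
    integrableOn_exp_smul_of_norm_le (hmeas_s.comp_measurable (measurable_sub_const s))
      (fun t ↦ hbound_s (t - s)) hl
  have hint_stay : Integrable (fun h ↦ Real.exp (-(l * h)) • smoothing ν l g h) U := by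
    simpa only [add_zero] using hUν.integrable_exp_smul_smoothing hl hg hK 0
  have hint_move : Integrable
      (fun h ↦ Real.exp (-(l * s)) • Real.exp (-(l * h)) • smoothing ν l g (h + s)) U :=
    (hUν.integrable_exp_smul_smoothing hl hg hK s).smul _
  have hexp : ∀ h, Real.exp (-(l * (h + s))) • smoothing ν l g (h + s) =
      Real.exp (-(l * s)) • Real.exp (-(l * h)) • smoothing ν l g (h + s) := fun h ↦ by
    rw [smul_smul, ← Real.exp_add, mul_add, neg_add_rev]
  simp only [hexp, jumpIncrement, smul_sub]
  rw [integral_sub hint_s hint, setIntegral_Ioi_exp_smul_comp_sub hmeas_s hbound_s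
      (fun t ht ↦ overshootMean_of_nonpos U ν _ ht) hl hs,
    hUν.setIntegral_exp_smul_overshootMean hl hg hK,
    hUν.setIntegral_exp_smul_overshootMean hl hgs fun y ↦ hK (y + s),
    integral_sub hint_move hint_stay, integral_smul]
  simp only [smoothing_comp_add_const, zero_add, add_sub_assoc]

end LaplaceTransform

section ExponentialWeight

variable {F : Type*} [NormedAddCommGroup F] [NormedSpace ℝ F] {w w' : ℝ → F} {K L l : ℝ}

theorem IsBoundedC1.hasDerivAt_exp_smul (hw : IsBoundedC1 w w' K L) (l : ℝ) {y : ℝ}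
    (hy : 0 < y) :
    HasDerivAt (fun y ↦ Real.exp (-(l * y)) • w y) (Real.exp (-(l * y)) • (w' y - l • w y)) y := by
  have hexp : HasDerivAt (fun y ↦ Real.exp (-(l * y))) (Real.exp (-(l * y)) * -l) y := by
    simpa using ((hasDerivAt_id y).const_mul l).fun_neg.exp
  refine (hexp.smul (hw.hasDerivAt y hy)).congr_deriv ?_
  rw [smul_sub, smul_smul, mul_neg, neg_smul, sub_eq_add_neg]

theorem IsBoundedC1.integrableOn_exp_smul_deriv (hw : IsBoundedC1 w w' K L) (hl : 0 < l) :
    IntegrableOn (fun y ↦ Real.exp (-(l * y)) • (w' y - l • w y)) (Ioi 0) := by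
  have := hw.continuous
  have := hw.continuous_deriv
  refine integrableOn_exp_smul_of_norm_le (K := L + l * K)
    (Continuous.stronglyMeasurable (by fun_prop)) (fun y ↦ (norm_sub_le _ _).trans ?_) hl
  rw [norm_smul, Real.norm_of_nonneg hl.le]
  gcongr
  exacts [hw.norm_deriv_le y, hw.norm_le y]

theorem IsBoundedC1.tendsto_exp_smul (hw : IsBoundedC1 w w' K L) (hl : 0 < l) :
    Tendsto (fun y ↦ Real.exp (-(l * y)) • w y) atTop (𝓝 0) := by
  have hexp : Tendsto (fun y ↦ Real.exp (-(l * y))) atTop (𝓝 0) :=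
    Real.tendsto_exp_neg_atTop_nhds_zero.comp (tendsto_id.const_mul_atTop hl)
  exact hexp.zero_smul_isBoundedUnder_le (isBoundedUnder_of ⟨K, hw.norm_le⟩)

end ExponentialWeight

section Cancellation

variable {F : Type*} [NormedAddCommGroup F] [NormedSpace ℝ F] [CompleteSpace F]
  {U ν : Measure ℝ} [SFinite U] [SFinite ν] {k k' : ℝ → F}

theorem IsRenewalPair.setIntegral_Ioo_deriv_ae_eq {U ν : Measure ℝ} (hUν : IsRenewalPair U ν)
    (hk : Continuous k) (hderiv : ∀ y > 0, HasDerivAt k (k' y) y)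
    (hk' : IntegrableOn k' (Ioi 0)) :
    (fun p ↦ ∫ y in Ioo p.1 (p.1 + p.2), k' y) =ᵐ[U.prod ν] fun p ↦ k (p.1 + p.2) - k p.1 := by
  filter_upwards [hUν.ae_pos] with p hp
  have hle : p.1 ≤ p.1 + p.2 := le_add_of_nonneg_right hp.2.le
  rw [← integral_Ioc_eq_integral_Ioo, ← intervalIntegral.integral_of_le hle]
  refine intervalIntegral.integral_eq_sub_of_hasDerivAt_of_le hle hk.continuousOn
    (fun y hy ↦ hderiv y (hp.1.trans hy.1)) ?_
  rw [intervalIntegrable_iff_integrableOn_Ioc_of_le hle]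
  exact hk'.mono_set fun y hy ↦ hp.1.trans hy.1

theorem IsRenewalPair.integrable_sub_of_hasDerivAt (hUν : IsRenewalPair U ν) (hk : Continuous k)
    (hderiv : ∀ y > 0, HasDerivAt k (k' y) y) (hk' : IntegrableOn k' (Ioi 0)) :
    Integrable (fun p : ℝ × ℝ ↦ k (p.1 + p.2) - k p.1) (U.prod ν) :=
  (hUν.integrable_setIntegral_Ioo_const hk').congr (hUν.setIntegral_Ioo_deriv_ae_eq hk hderiv hk')

theorem IsRenewalPair.integral_sub_of_hasDerivAt_of_tendsto (hUν : IsRenewalPair U ν)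
    (hk : Continuous k) (hderiv : ∀ y > 0, HasDerivAt k (k' y) y) (hk' : IntegrableOn k' (Ioi 0))
    (hlim : Tendsto k atTop (𝓝 0)) :
    ∫ p, (k (p.1 + p.2) - k p.1) ∂U.prod ν = -k 0 := by
  rw [← integral_congr_ae (hUν.setIntegral_Ioo_deriv_ae_eq hk hderiv hk'),
    hUν.integral_setIntegral_Ioo_const hk',
    integral_Ioi_of_hasDerivAt_of_tendsto hk.continuousWithinAt hderiv hk' hlim, zero_sub]

variable {g g' : ℝ → F} {K L l : ℝ}

theorem IsRenewalPair.integral_setIntegral_exp_smul_jumpIncrement (hUν : IsRenewalPair U ν)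
    (hg : IsBoundedC1 g g' K L) (hl : 0 < l) :
    ∫ s, (∫ t in Ioi 0, Real.exp (-(l * t)) • jumpIncrement U ν g t s) ∂ν = 0 := by
  have hdisc := hUν.integrable_discount hl
  have hw := isBoundedC1_smoothing hUν.right_pos hdisc hg
  let k : ℝ → F := fun y ↦ Real.exp (-(l * y)) • smoothing ν l g y
  have hk : Continuous k := by have := hw.continuous; fun_prop
  have hderiv := fun y (hy : y > 0) ↦ hw.hasDerivAt_exp_smul l hy
  have hk' := hw.integrableOn_exp_smul_deriv hl
  have hint := hUν.integrable_sub_of_hasDerivAt hk hderiv hk'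
  calc ∫ s, (∫ t in Ioi 0, Real.exp (-(l * t)) • jumpIncrement U ν g t s) ∂ν
      = ∫ s, (discount l s • g s + ∫ h, (k (h + s) - k h) ∂U) ∂ν :=
        integral_congr_ae (hUν.right_pos.mono fun s hs ↦
          hUν.setIntegral_exp_smul_jumpIncrement hl hg.continuous hg.norm_le hs.le)
    _ = smoothing ν l g 0 + ∫ p, (k (p.1 + p.2) - k p.1) ∂U.prod ν := by
        have hdg := integrable_discount_smul hdisc hg.continuous hg.norm_le 0
        simp only [zero_add] at hdg
        rw [integral_add hdg hint.integral_prod_right, integral_prod_symm _ hint]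
        simp only [smoothing, zero_add]
    _ = 0 := by
        rw [hUν.integral_sub_of_hasDerivAt_of_tendsto hk hderiv hk' (hw.tendsto_exp_smul hl)]
        simp [k]

theorem IsRenewalPair.integrableOn_exp_smul_integral_jumpIncrement (hUν : IsRenewalPair U ν)
    (hg : IsBoundedC1 g g' K L) (hl : 0 < l) :
    IntegrableOn (fun t ↦ Real.exp (-(l * t)) • ∫ s, jumpIncrement U ν g t s ∂ν) (Ioi 0) := by
  simp only [← integral_smul]
  exact (hUν.integrable_exp_smul_jumpIncrement hg hl).integral_prod_left

theorem IsRenewalPair.setIntegral_exp_smul_integral_jumpIncrement (hUν : IsRenewalPair U ν)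
    (hg : IsBoundedC1 g g' K L) (hl : 0 < l) :
    ∫ t in Ioi 0, Real.exp (-(l * t)) • ∫ s, jumpIncrement U ν g t s ∂ν = 0 := by
  simp only [← integral_smul]
  rw [integral_integral_swap (hUν.integrable_exp_smul_jumpIncrement hg hl),
    hUν.integral_setIntegral_exp_smul_jumpIncrement hg hl]

end Cancellation

section RenewalMeasure

variable {ν : Measure ℝ} {f : ℝ → ENNReal} {uφ : ℝ → ℝ}

theorem sigmaFinite_restrict_Ioi (hν : ∀ t > 0, ν (Ioi t) < ⊤) :
    SigmaFinite (ν.restrict (Ioi 0)) := by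
  refine Measure.sigmaFinite_of_countable
    (S := insert (Iic 0) (range fun n : ℕ ↦ Ioi (1 / ((n : ℝ) + 1)))) (by simp [countable_range])
    ?_ (eq_univ_of_forall fun t ↦ ?_)
  · rintro _ (rfl | ⟨n, rfl⟩)
    · simp [Measure.restrict_apply measurableSet_Iic, (Iic_disjoint_Ioi le_rfl).inter_eq]
    · exact (Measure.restrict_apply_le _ _).trans_lt (hν _ Nat.one_div_pos_of_nat)
  · rcases le_or_gt t 0 with ht | ht
    · exact ⟨Iic 0, mem_insert _ _, ht⟩
    · obtain ⟨n, hn⟩ := exists_nat_one_div_lt ht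
      exact ⟨_, mem_insert_of_mem _ ⟨n, rfl⟩, hn⟩

theorem measure_Ioi_lt_top_of_renewal (hf : Measurable f)
    (hrenew : ∀ t > 0, ∫⁻ h in Ioo 0 t, ν (Ioi (t - h)) * f h = 1) {t : ℝ} (ht : 0 < t) :
    ν (Ioi t) < ⊤ := by
  by_contra! htop
  have hinner : ∀ h ∈ Ioo 0 t, ν (Ioi (t - h)) * f h = ⊤ * f h := fun h hh ↦ by
    rw [top_unique (htop.trans (measure_mono (Ioi_subset_Ioi (sub_le_self t hh.1.le))))]
  have hone := hrenew t ht
  rw [setLIntegral_congr_fun measurableSet_Ioo hinner, lintegral_const_mul _ hf,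
    ENNReal.top_mul'] at hone
  split_ifs at hone
  · exact zero_ne_one hone
  · exact ENNReal.top_ne_one hone

/-- The measure on `(0, ∞)` with Lebesgue density `uφ`. -/
noncomputable def renewalMeasure (uφ : ℝ → ℝ) : Measure ℝ :=
  (volume.restrict (Ioi 0)).withDensity fun h ↦ ENNReal.ofReal (uφ h)

instance (uφ : ℝ → ℝ) : SFinite (renewalMeasure uφ) := by
  unfold renewalMeasure
  infer_instance

theorem measurable_measure_Ioi_sub (ν : Measure ℝ) (τ : ℝ) : Measurable fun h ↦ ν (Ioi (τ - h)) :=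
  Monotone.measurable fun _ _ hab ↦ measure_mono (Ioi_subset_Ioi (sub_le_sub_left hab τ))

theorem prodMk_preimage_straddle (τ h : ℝ) :
    Prod.mk h ⁻¹' straddle τ = if h < τ then Ioi (τ - h) else ∅ := by
  ext r
  split_ifs with hh <;> simp [straddle, hh, sub_lt_iff_lt_add']

theorem isRenewalPair_renewalMeasure [SFinite (ν.restrict (Ioi 0))] (huφ : Measurable uφ)
    (hrenew : ∀ t > 0, ∫⁻ h in Ioo 0 t, ν (Ioi (t - h)) * ENNReal.ofReal (uφ h) = 1) :
    IsRenewalPair (renewalMeasure uφ) (ν.restrict (Ioi 0)) where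
  left_pos := (withDensity_absolutelyContinuous _ _).ae_le (ae_restrict_mem measurableSet_Ioi)
  right_pos := ae_restrict_mem measurableSet_Ioi
  prod_straddle τ hτ := by
    have hslice : ∀ h, (ν.restrict (Ioi 0)) (Prod.mk h ⁻¹' straddle τ) =
        (Iio τ).indicator (fun h ↦ ν (Ioi (τ - h))) h := fun h ↦ by
      rw [prodMk_preimage_straddle]
      by_cases hh : h < τ
      · rw [if_pos hh, indicator_of_mem (mem_Iio.2 hh), Measure.restrict_apply measurableSet_Ioi,
          inter_eq_left.2 (Ioi_subset_Ioi (sub_nonneg.2 hh.le))]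
      · rw [if_neg hh, indicator_of_notMem (notMem_Iio.2 (not_lt.1 hh)), measure_empty]
    rw [Measure.prod_apply (measurableSet_straddle τ), lintegral_congr hslice,
      lintegral_indicator measurableSet_Iio, renewalMeasure, restrict_withDensity measurableSet_Iio,
      Measure.restrict_restrict measurableSet_Iio, Iio_inter_Ioi,
      lintegral_withDensity_eq_lintegral_mul _ (by fun_prop) (measurable_measure_Ioi_sub ν τ),
      ← hrenew τ hτ]
    simp only [Pi.mul_apply, mul_comm]

theorem overshootMean_renewalMeasure {F : Type*} [NormedAddCommGroup F] [NormedSpace ℝ F]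
    [SFinite (ν.restrict (Ioi 0))] (hUν : IsRenewalPair (renewalMeasure uφ) (ν.restrict (Ioi 0)))
    (huφ : Measurable uφ) (huφ0 : ∀ t > 0, 0 ≤ uφ t) {g : ℝ → F} {K : ℝ} (hg : Continuous g)
    (hK : ∀ y, ‖g y‖ ≤ K) {τ : ℝ} (hτ : 0 < τ) :
    overshootMean (renewalMeasure uφ) (ν.restrict (Ioi 0)) g τ =
      ∫ h in Ioo 0 τ, uφ h • ∫ r in Ioi (τ - h), g (r + h) ∂ν := by
  have hslice : ∀ h, ∫ r in Ioi 0, (straddle τ).indicator (fun p ↦ g (p.1 + p.2)) (h, r) ∂ν =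
      (Iio τ).indicator (fun h ↦ ∫ r in Ioi (τ - h), g (r + h) ∂ν) h := fun h ↦ by
    change ∫ r in Ioi 0, (Prod.mk h ⁻¹' straddle τ).indicator (fun r ↦ g (h + r)) r ∂ν = _
    rw [prodMk_preimage_straddle]
    by_cases hh : h < τ
    · rw [if_pos hh, indicator_of_mem (mem_Iio.2 hh), setIntegral_indicator measurableSet_Ioi,
        inter_eq_right.2 (Ioi_subset_Ioi (sub_nonneg.2 hh.le))]
      simp only [add_comm]
    · rw [if_neg hh, indicator_of_notMem (notMem_Iio.2 (not_lt.1 hh))]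
      simp only [indicator_empty, integral_zero]
  rw [overshootMean_of_pos _ _ _ hτ, ← integral_indicator (measurableSet_straddle τ),
    integral_prod _ ((integrable_indicator_iff (measurableSet_straddle τ)).2
      (hUν.integrableOn_straddle hg hK hτ)), integral_congr_ae (Eventually.of_forall hslice),
    integral_indicator measurableSet_Iio, renewalMeasure,
    setIntegral_withDensity_eq_setIntegral_toReal_smul (by fun_prop)
      (Eventually.of_forall fun _ ↦ ENNReal.ofReal_lt_top) _ measurableSet_Iio,
    Measure.restrict_restrict measurableSet_Iio, Iio_inter_Ioi]
  refine setIntegral_congr_fun measurableSet_Ioo fun h hh ↦ ?_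
  simp only [ENNReal.toReal_ofReal (huφ0 h hh.1)]

end RenewalMeasure

section ContinuousLinearImage

variable {X Y : Type*} [NormedAddCommGroup X] [NormedSpace ℝ X]
  [NormedAddCommGroup Y] [NormedSpace ℝ Y] {U ν : Measure ℝ} {g g' : ℝ → X} {K L : ℝ}

theorem IsBoundedC1.clm_comp (T : X →L[ℝ] Y) (hg : IsBoundedC1 g g' K L) :
    IsBoundedC1 (fun y ↦ T (g y)) (fun y ↦ T (g' y)) (‖T‖ * K) (‖T‖ * L) where
  continuous := T.continuous.comp hg.continuous
  continuous_deriv := T.continuous.comp hg.continuous_deriv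
  hasDerivAt y hy := T.hasFDerivAt.comp_hasDerivAt y (hg.hasDerivAt y hy)
  norm_le y := T.le_opNorm_of_le (hg.norm_le y)
  norm_deriv_le y := T.le_opNorm_of_le (hg.norm_deriv_le y)

variable [CompleteSpace X] [CompleteSpace Y]

theorem IsRenewalPair.overshootMean_clm_comp (hUν : IsRenewalPair U ν) (T : X →L[ℝ] Y)
    (hg : Continuous g) (hK : ∀ y, ‖g y‖ ≤ K) (τ : ℝ) :
    overshootMean U ν (fun y ↦ T (g y)) τ = T (overshootMean U ν g τ) := by
  rcases le_or_gt τ 0 with hτ | hτ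
  · simp only [overshootMean_of_nonpos _ _ _ hτ]
  · simp only [overshootMean_of_pos _ _ _ hτ]
    exact T.integral_comp_comm (hUν.integrableOn_straddle hg hK hτ)

theorem IsRenewalPair.jumpIncrement_clm_comp (hUν : IsRenewalPair U ν) (T : X →L[ℝ] Y)
    (hg : Continuous g) (hK : ∀ y, ‖g y‖ ≤ K) (t s : ℝ) :
    jumpIncrement U ν (fun y ↦ T (g y)) t s = T (jumpIncrement U ν g t s) := by
  have hgs : Continuous fun y ↦ g (y + s) := by fun_prop
  rw [jumpIncrement, jumpIncrement, map_sub, hUν.overshootMean_clm_comp T hg hK,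
    hUν.overshootMean_clm_comp T hgs fun y ↦ hK (y + s)]

end ContinuousLinearImage

section ContractionSemigroup

theorem hasDerivAt_of_hasDerivWithinAt_Ioi {F : Type*} [NormedAddCommGroup F] [NormedSpace ℝ F]
    [CompleteSpace F] {g g' : ℝ → F} {a : ℝ} (hg : Continuous g) (hg' : Continuous g')
    (hright : ∀ y > a, HasDerivWithinAt g (g' y) (Ioi y) y) {y : ℝ} (hy : a < y) :
    HasDerivAt g (g' y) y := by
  have hprim : HasDerivAt (fun z ↦ g a + ∫ x in a..z, g' x) (g' y) y :=
    (hg'.integral_hasStrictDerivAt a y).hasDerivAt.const_add (g a)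
  refine hprim.congr_of_eventuallyEq ?_
  filter_upwards [Ioi_mem_nhds hy] with z hz
  rw [intervalIntegral.integral_eq_sub_of_hasDeriv_right hg.continuousOn
    (fun x hx ↦ hright x ((min_eq_left (mem_Ioi.1 hz).le).symm.trans_lt hx.1))
    (hg'.intervalIntegrable a z), add_sub_cancel]

variable {X : Type*} [NormedAddCommGroup X] [NormedSpace ℝ X]

/-- Strongly continuous contraction semigroups on a normed space, indexed by `ℝ` with no condition
at negative times. -/
structure IsContractionSemigroup (P : ℝ → X →L[ℝ] X) : Prop where
  map_zero : P 0 = ContinuousLinearMap.id ℝ X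
  map_add : ∀ s t : ℝ, 0 ≤ s → 0 ≤ t → P (s + t) = (P s).comp (P t)
  norm_map_le : ∀ t : ℝ, 0 ≤ t → ∀ f : X, ‖P t f‖ ≤ ‖f‖
  tendsto_zero : ∀ f : X, Tendsto (fun t ↦ P t f) (𝓝[≥] (0 : ℝ)) (𝓝 f)

/-- The curve `t ↦ P_t u`, extended by the constant `P_0 u` to negative times. -/
def orbit (P : ℝ → X →L[ℝ] X) (u : X) (y : ℝ) : X := P (max y 0) u

theorem orbit_of_nonneg (P : ℝ → X →L[ℝ] X) (u : X) {y : ℝ} (hy : 0 ≤ y) : orbit P u y = P y u := by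
  rw [orbit, max_eq_left hy]

namespace IsContractionSemigroup

variable {P : ℝ → X →L[ℝ] X} {u Gu : X}

theorem map_add_apply (hP : IsContractionSemigroup P) {s t : ℝ} (hs : 0 ≤ s) (ht : 0 ≤ t) (f : X) :
    P (s + t) f = P s (P t f) := by
  rw [hP.map_add s t hs ht, ContinuousLinearMap.comp_apply]

theorem norm_map_sub_map_le (hP : IsContractionSemigroup P) (f : X) {s t : ℝ} (hs : 0 ≤ s)
    (ht : 0 ≤ t) : ‖P t f - P s f‖ ≤ ‖P |t - s| f - f‖ := by
  wlog hst : s ≤ t generalizing s t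
  · rw [norm_sub_rev, abs_sub_comm]
    exact this ht hs (le_of_not_ge hst)
  have hts := sub_nonneg.2 hst
  calc ‖P t f - P s f‖ = ‖P s (P (t - s) f - f)‖ := by
        rw [map_sub, ← hP.map_add_apply hs hts, add_sub_cancel]
    _ ≤ ‖P |t - s| f - f‖ := by
        rw [abs_of_nonneg hts]
        exact hP.norm_map_le s hs _

theorem continuous_orbit (hP : IsContractionSemigroup P) (u : X) : Continuous (orbit P u) := by
  refine continuous_iff_continuousAt.2 fun y ↦ tendsto_iff_norm_sub_tendsto_zero.2 ?_
  have hdist : Tendsto (fun z ↦ |max z 0 - max y 0|) (𝓝 y) (𝓝[≥] 0) := by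
    refine tendsto_nhdsWithin_iff.2 ⟨?_, Eventually.of_forall fun z ↦ mem_Ici.2 (abs_nonneg _)⟩
    have hcont : Continuous fun z : ℝ ↦ |max z 0 - max y 0| := by fun_prop
    simpa using hcont.tendsto y
  exact squeeze_zero (fun _ ↦ norm_nonneg _)
    (fun z ↦ hP.norm_map_sub_map_le u (le_max_right y 0) (le_max_right z 0))
    (tendsto_iff_norm_sub_tendsto_zero.1 ((hP.tendsto_zero u).comp hdist))

theorem norm_orbit_le (hP : IsContractionSemigroup P) (u : X) (y : ℝ) : ‖orbit P u y‖ ≤ ‖u‖ :=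
  hP.norm_map_le _ (le_max_right y 0) u

theorem hasDerivWithinAt_orbit (hP : IsContractionSemigroup P)
    (hu : Tendsto (fun h : ℝ ↦ h⁻¹ • (P h u - u)) (𝓝[>] 0) (𝓝 Gu)) {y : ℝ} (hy : 0 ≤ y) :
    HasDerivWithinAt (orbit P u) (orbit P Gu y) (Ioi y) y := by
  rw [hasDerivWithinAt_iff_tendsto_slope' self_notMem_Ioi, orbit_of_nonneg P Gu hy]
  have hshift : Tendsto (fun z ↦ z - y) (𝓝[>] y) (𝓝[>] 0) :=
    tendsto_nhdsWithin_iff.2 ⟨tendsto_nhdsWithin_of_tendsto_nhds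
      (by simpa using (continuous_sub_right y).tendsto y),
      eventually_mem_nhdsWithin.mono fun z hz ↦ mem_Ioi.2 (sub_pos.2 hz)⟩
  refine (((P y).continuous.tendsto Gu).comp (hu.comp hshift)).congr' ?_
  filter_upwards [self_mem_nhdsWithin] with z (hz : y < z)
  have hzy := sub_nonneg.2 hz.le
  simp only [Function.comp_apply, slope_def_module, map_smul, map_sub,
    ← hP.map_add_apply hy hzy, add_sub_cancel, orbit_of_nonneg P u (hy.trans hz.le),
    orbit_of_nonneg P u hy]

variable [CompleteSpace X]

theorem isBoundedC1_orbit (hP : IsContractionSemigroup P)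
    (hu : Tendsto (fun h : ℝ ↦ h⁻¹ • (P h u - u)) (𝓝[>] 0) (𝓝 Gu)) :
    IsBoundedC1 (orbit P u) (orbit P Gu) ‖u‖ ‖Gu‖ where
  continuous := hP.continuous_orbit u
  continuous_deriv := hP.continuous_orbit Gu
  hasDerivAt _ hy := hasDerivAt_of_hasDerivWithinAt_Ioi (hP.continuous_orbit u)
    (hP.continuous_orbit Gu) (fun _ hz ↦ hP.hasDerivWithinAt_orbit hu hz.le) hy
  norm_le := hP.norm_orbit_le u
  norm_deriv_le := hP.norm_orbit_le Gu

theorem jumpIncrement_orbit (hP : IsContractionSemigroup P) {U ν : Measure ℝ}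
    (hUν : IsRenewalPair U ν) (u : X) (t : ℝ) {s : ℝ} (hs : 0 ≤ s) :
    jumpIncrement U ν (orbit P u) t s =
      P s (overshootMean U ν (orbit P u) (t - s)) - overshootMean U ν (orbit P u) t := by
  rw [jumpIncrement, ← hUν.overshootMean_clm_comp (P s) (hP.continuous_orbit u)
    (hP.norm_orbit_le u)]
  congr 1
  refine overshootMean_congr U ν (fun y hy ↦ ?_) _
  rw [orbit_of_nonneg P u (add_nonneg hy hs), orbit_of_nonneg P u hy, add_comm,
    hP.map_add_apply hs hy]

end IsContractionSemigroup

end ContractionSemigroup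

section NonlocalOperator

variable {E : Type*} [TopologicalSpace E]

/-- Evaluation at the point `x`, as a continuous linear functional on `C₀(E, ℝ)`. -/
noncomputable def pointEval (x : E) : C₀(E, ℝ) →L[ℝ] ℝ :=
  LinearMap.mkContinuous
    { toFun := fun f ↦ f x, map_add' := fun _ _ ↦ rfl, map_smul' := fun _ _ ↦ rfl } 1 fun f ↦ by
      rw [one_mul, ← ZeroAtInftyContinuousMap.norm_toBCF_eq_norm]
      exact f.toBCF.norm_coe_le_norm x

variable {P : ℝ → C₀(E, ℝ) →L[ℝ] C₀(E, ℝ)} {ν : Measure ℝ} [SFinite (ν.restrict (Ioi 0))]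
  {uφ : ℝ → ℝ}

theorem cand_max_zero_eq_overshootMean (hP : IsContractionSemigroup P)
    (hUν : IsRenewalPair (renewalMeasure uφ) (ν.restrict (Ioi 0))) (huφ : Measurable uφ)
    (huφ0 : ∀ t > 0, 0 ≤ uφ t) (u : C₀(E, ℝ)) (τ : ℝ) :
    cand P ν uφ u (max τ 0) =
      overshootMean (renewalMeasure uφ) (ν.restrict (Ioi 0)) (orbit P u) τ := by
  rcases le_or_gt τ 0 with hτ | hτ
  · rw [max_eq_right hτ, cand, if_pos rfl, overshootMean_of_nonpos _ _ _ hτ,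
      orbit_of_nonneg P u le_rfl, hP.map_zero, ContinuousLinearMap.id_apply]
  · rw [max_eq_left hτ.le, cand, if_neg hτ.ne', overshootMean_renewalMeasure hUν huφ huφ0
      (hP.continuous_orbit u) (hP.norm_orbit_le u) hτ]
    refine setIntegral_congr_fun measurableSet_Ioo fun h _ ↦ ?_
    congr 1
    refine setIntegral_congr_fun measurableSet_Ioi fun r (hr : τ - h < r) ↦ ?_
    exact (orbit_of_nonneg P u (by linarith)).symm

theorem Aop_cand_eq_integral_jumpIncrement (hP : IsContractionSemigroup P)
    (hUν : IsRenewalPair (renewalMeasure uφ) (ν.restrict (Ioi 0))) (huφ : Measurable uφ)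
    (huφ0 : ∀ t > 0, 0 ≤ uφ t) (u : C₀(E, ℝ)) (x : E) {t : ℝ} (ht : 0 ≤ t) :
    Aop P ν (cand P ν uφ u) x t = ∫ s in Ioi 0, jumpIncrement (renewalMeasure uφ)
      (ν.restrict (Ioi 0)) (fun y ↦ pointEval x (orbit P u y)) t s ∂ν := by
  refine setIntegral_congr_fun measurableSet_Ioi fun s (hs : 0 < s) ↦ ?_
  have hcand := cand_max_zero_eq_overshootMean hP hUν huφ huφ0 u
  have hstay := hcand t
  rw [max_eq_left ht] at hstay
  rw [hUν.jumpIncrement_clm_comp (pointEval x) (hP.continuous_orbit u) (hP.norm_orbit_le u),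
    hP.jumpIncrement_orbit hUν u t hs.le, hcand (t - s), hstay]
  rfl

end NonlocalOperator

end Ctrw

theorem ctrw_overshoot_step_ii_general {E : Type*} [TopologicalSpace E]
    {P : ℝ → C₀(E, ℝ) →L[ℝ] C₀(E, ℝ)} (hP : Ctrw.IsContractionSemigroup P) {ν : Measure ℝ}
    {uφ : ℝ → ℝ} (huφm : Measurable uφ) (huφ0 : ∀ t : ℝ, 0 < t → 0 ≤ uφ t)
    (hrenew : ∀ t : ℝ, 0 < t →
      ∫⁻ h in Ioo 0 t, ν (Ioi (t - h)) * ENNReal.ofReal (uφ h) = 1)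
    {u Gu : C₀(E, ℝ)} (hu : Tendsto (fun h : ℝ ↦ h⁻¹ • (P h u - u)) (𝓝[>] 0) (𝓝 Gu))
    (x : E) {l : ℝ} (hl : 0 < l) :
    IntegrableOn (fun t ↦ Real.exp (-(l * t)) * Aop P ν (cand P ν uφ u) x t) (Ioi 0) ∧
      ∫ t in Ioi 0, Real.exp (-(l * t)) * Aop P ν (cand P ν uφ u) x t = 0 := by
  have : SigmaFinite (ν.restrict (Ioi 0)) := Ctrw.sigmaFinite_restrict_Ioi fun _ ↦
    Ctrw.measure_Ioi_lt_top_of_renewal (by fun_prop) hrenew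
  have hUν := Ctrw.isRenewalPair_renewalMeasure huφm hrenew
  have hg := (hP.isBoundedC1_orbit hu).clm_comp (Ctrw.pointEval x)
  have hAop : EqOn (fun t ↦ Real.exp (-(l * t)) * Aop P ν (cand P ν uφ u) x t)
      (fun t ↦ Real.exp (-(l * t)) • ∫ s in Ioi 0, Ctrw.jumpIncrement (Ctrw.renewalMeasure uφ)
        (ν.restrict (Ioi 0)) (fun y ↦ Ctrw.pointEval x (Ctrw.orbit P u y)) t s ∂ν) (Ioi 0) :=
    fun t ht ↦ by
      simp only [Ctrw.Aop_cand_eq_integral_jumpIncrement hP hUν huφm huφ0 u x (mem_Ioi.1 ht).le,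
        smul_eq_mul]
  exact ⟨(integrableOn_congr_fun hAop measurableSet_Ioi).2
      (hUν.integrableOn_exp_smul_integral_jumpIncrement hg hl),
    (setIntegral_congr_fun measurableSet_Ioi hAop).trans
      (hUν.setIntegral_exp_smul_integral_jumpIncrement hg hl)⟩

/-- Step (ii): for every `u ∈ D(G)`, `x ∈ E` and `λ > 0`, the function `t ↦ 𝔄⁺Q(x,t)` is
Lebesgue integrable on `(0,∞)` against `e^{-λt} dt` and its Laplace transform vanishes. -/
theorem ctrw_overshoot_step_ii
    {E : Type*} [MetricSpace E] [TopologicalSpace.SeparableSpace E] [LocallyCompactSpace E]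
    (P : ℝ → C₀(E, ℝ) →L[ℝ] C₀(E, ℝ))
    (hP0 : P 0 = ContinuousLinearMap.id ℝ C₀(E, ℝ))
    (hPsg : ∀ s t : ℝ, 0 ≤ s → 0 ≤ t → P (s + t) = (P s).comp (P t))
    (hPpos : ∀ t : ℝ, 0 ≤ t → ∀ f : C₀(E, ℝ), (∀ x, 0 ≤ f x) → ∀ x, 0 ≤ P t f x)
    (hPcon : ∀ t : ℝ, 0 ≤ t → ∀ f : C₀(E, ℝ), ‖P t f‖ ≤ ‖f‖)
    (hPsc : ∀ f : C₀(E, ℝ), Tendsto (fun t => P t f) (𝓝[≥] (0 : ℝ)) (𝓝 f))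
    (ν : Measure ℝ)
    (hν1 : ∫⁻ s in Set.Ioi (0 : ℝ), ENNReal.ofReal (min 1 s) ∂ν ≠ ⊤)
    (hνinf : ν (Set.Ioi (0 : ℝ)) = ⊤)
    (hνpos : ∀ t : ℝ, 0 < t → 0 < ν (Set.Ioi t))
    (uφ : ℝ → ℝ) (huφm : Measurable uφ)
    (huφ0 : ∀ t : ℝ, 0 < t → 0 ≤ uφ t)
    (huφmono : ∀ s t : ℝ, 0 < s → s ≤ t → uφ t ≤ uφ s)
    (hrenew : ∀ t : ℝ, 0 < t →
      ∫⁻ h in Set.Ioo 0 t, ν (Set.Ioi (t - h)) * ENNReal.ofReal (uφ h) = 1)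
    (hlog : ∫⁻ t in Set.Ioo (0 : ℝ) 1, ENNReal.ofReal (|Real.log t| * uφ t) ≠ ⊤)
    (u Gu : C₀(E, ℝ))
    (hu : Tendsto (fun h : ℝ => h⁻¹ • (P h u - u)) (𝓝[>] (0 : ℝ)) (𝓝 Gu)) :
    ∀ (x : E) (l : ℝ), 0 < l →
      IntegrableOn (fun t : ℝ => Real.exp (-(l * t)) * Aop P ν (cand P ν uφ u) x t)
        (Set.Ioi 0) volume ∧
      ∫ t in Set.Ioi (0 : ℝ), Real.exp (-(l * t)) * Aop P ν (cand P ν uφ u) x t = 0 :=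
  fun x _ hl ↦ ctrw_overshoot_step_ii_general ⟨hP0, hPsg, hPcon, hPsc⟩ huφm huφ0 hrenew hu x hl
end

section
/- Main theorem, existence part: for every u in D(G), the function q(x,t) := Q(t)(x) solves the generalized harmonic problem for the coupled space-time nonlocal operator, i.e. for every (x,t) in E × (0,∞) the integral 𝔄⁺Q(x,t) = ∫₀^∞ ((P_s Q((t−s)∨0))(x) − Q(t)(x)) ν(ds) converges absolutely and equals 0, and the initial condition Q(0) = u holds. -/
open MeasureTheory Set Filter Topology
open scoped ZeroAtInfty

/-!
Write `F r = P r u`. Averaged over the point `h` from which the process jumps across `t`, `Q t` is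
`F t + ∫_{h < t} w h dU`, where `U` is the potential measure and
`w h = ∫ (F ((r + h) ∨ t) - F t) ν(dr)`. Since `P s (F r) = F (r + s)`, applying `P s` to
`Q ((t - s) ∨ 0)` merely moves the starting point to `s`, and with `v = w'` on `(0, t)`
`P s (Q ((t - s) ∨ 0)) - Q t = (F (s ∨ t) - F t) - U [t - s, t) w t + ∫₀ᵗ U [h - s, h) v h dh`.
The renewal equation is `∫ U [h - s, h) ν(ds) = 1`, so integrating in `s` leaves
`w 0 - w t + (w t - w 0) = 0`.
-/

section BanachSpace

variable {B : Type*} [NormedAddCommGroup B] [NormedSpace ℝ B]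

/-- The Lévy measure of a driftless subordinator, encoded as a measure on `ℝ` carried by
`(0, ∞)`. -/
structure IsSubordinatorLevyMeasure (ν : Measure ℝ) : Prop where
  ae_pos : ∀ᵐ s ∂ν, 0 < s
  lintegral_min_one_ne_top : ∫⁻ s, ENNReal.ofReal (min 1 s) ∂ν ≠ ⊤

namespace IsSubordinatorLevyMeasure

variable {ν : Measure ℝ}

lemma integrable_min_one (hν : IsSubordinatorLevyMeasure ν) :
    Integrable (fun s : ℝ => min 1 s) ν := by
  refine ⟨by fun_prop, ?_⟩
  have hnorm : ∀ᵐ s ∂ν, ENNReal.ofReal ‖min 1 s‖ = ENNReal.ofReal (min 1 s) := by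
    filter_upwards [hν.ae_pos] with s hs
    rw [Real.norm_of_nonneg (le_min zero_le_one hs.le)]
  rw [hasFiniteIntegral_iff_norm, lintegral_congr_ae hnorm]
  exact hν.lintegral_min_one_ne_top.lt_top

lemma measure_Ioi_lt_top (hν : IsSubordinatorLevyMeasure ν) {a : ℝ} (ha : 0 < a) :
    ν (Ioi a) < ⊤ :=
  (measure_mono fun _ hs => min_le_min_left 1 (mem_Ioi.1 hs).le).trans_lt
    (hν.integrable_min_one.measure_ge_lt_top (lt_min one_pos ha))

lemma isFiniteMeasure_restrict_Ioi (hν : IsSubordinatorLevyMeasure ν) {a : ℝ} (ha : 0 < a) :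
    IsFiniteMeasure (ν.restrict (Ioi a)) :=
  isFiniteMeasure_restrict.2 (hν.measure_Ioi_lt_top ha).ne

lemma sFinite (hν : IsSubordinatorLevyMeasure ν) : SFinite ν := by
  have : IsFiniteMeasure (ν.withDensity fun s => ENNReal.ofReal (min 1 s)) :=
    isFiniteMeasure_withDensity hν.lintegral_min_one_ne_top
  have hpos : ∀ᵐ s ∂ν, ENNReal.ofReal (min 1 s) ≠ 0 := by
    filter_upwards [hν.ae_pos] with s hs
    simp [hs]
  rw [← withDensity_inv_same (by fun_prop) hpos (.of_forall fun _ => ENNReal.ofReal_ne_top)]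
  infer_instance

lemma measure_prod_crossing_lt_top (hν : IsSubordinatorLevyMeasure ν) (a t : ℝ) :
    (ν.prod (volume.restrict (Ioc a t))) {p | t < p.1 + p.2} < ⊤ := by
  have := hν.sFinite
  have hslice : ∀ᵐ r ∂ν, volume.restrict (Ioc a t) (Prod.mk r ⁻¹' {p | t < p.1 + p.2}) ≤
      ENNReal.ofReal (max 1 (t - a)) * ENNReal.ofReal (min 1 r) := by
    filter_upwards [hν.ae_pos] with r hr
    have hset : Prod.mk r ⁻¹' {p : ℝ × ℝ | t < p.1 + p.2} = Ioi (t - r) := by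
      ext h
      simp [sub_lt_iff_lt_add']
    rw [hset, Measure.restrict_apply measurableSet_Ioi, inter_comm, Ioc_inter_Ioi,
      Real.volume_Ioc, ← ENNReal.ofReal_mul (by positivity)]
    apply ENNReal.ofReal_le_ofReal
    have hmax : 1 ≤ max 1 (t - a) := le_max_left _ _
    rcases le_total 1 r with h | h
    · rw [min_eq_left h]
      linarith [le_max_left a (t - r), le_max_right 1 (t - a)]
    · rw [min_eq_right h]
      nlinarith [le_max_right a (t - r)]
  rw [Measure.prod_apply (measurableSet_lt (by fun_prop) (by fun_prop))]
  refine (lintegral_mono_ae hslice).trans_lt ?_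
  rw [lintegral_const_mul _ (by fun_prop)]
  exact ENNReal.mul_lt_top ENNReal.ofReal_lt_top hν.lintegral_min_one_ne_top.lt_top

end IsSubordinatorLevyMeasure

/-- `F` is a bounded function which on `[0, ∞)` is the primitive of the bounded function `F'`. -/
structure IsBoundedPrimitive (F F' : ℝ → B) (C C' : ℝ) : Prop where
  continuous : Continuous F
  stronglyMeasurable_deriv : StronglyMeasurable F'
  norm_le : ∀ r, ‖F r‖ ≤ C
  norm_deriv_le : ∀ r, ‖F' r‖ ≤ C'
  sub_eq_integral : ∀ a b, 0 ≤ a → a ≤ b → F b - F a = ∫ y in a..b, F' y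

/-- The `ν`-average over the jump size `r` of the increment of `F` between the level `t` and the
point reached from `h` by a jump across `t`; jumps that stay below `t` contribute nothing. -/
noncomputable def jumpExcess (ν : Measure ℝ) (F : ℝ → B) (t h : ℝ) : B :=
  ∫ r, (F (max (r + h) t) - F t) ∂ν

/-- The derivative of `jumpExcess ν F t` in `h`, when `F'` is the derivative of `F`. -/
noncomputable def jumpExcessDeriv (ν : Measure ℝ) (F' : ℝ → B) (t h : ℝ) : B :=
  ∫ r, (Ioi t).indicator F' (r + h) ∂ν

/-- The average of `F` at the position where a subordinator with Lévy measure `ν` and potential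
measure `U`, started from `s`, first exceeds the level `t`. -/
noncomputable def firstPassageMean (ν U : Measure ℝ) (F : ℝ → B) (t s : ℝ) : B :=
  F (max s t) + ∫ h in Iio (t - s), jumpExcess ν F t (h + s) ∂U

lemma firstPassageMean_zero (ν U : Measure ℝ) (F : ℝ → B) {t : ℝ} (ht : 0 ≤ t) :
    firstPassageMean ν U F t 0 = F t + ∫ h in Iio t, jumpExcess ν F t h ∂U := by
  simp only [firstPassageMean, max_eq_right ht, sub_zero, add_zero]

lemma jumpExcess_zero (ν : Measure ℝ) (F : ℝ → B) (t : ℝ) :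
    jumpExcess ν F t 0 = ∫ s, (F (max s t) - F t) ∂ν := by
  simp only [jumpExcess, add_zero]

lemma stronglyMeasurable_jumpExcess (ν : Measure ℝ) [SFinite ν] {F : ℝ → B} (hF : Continuous F)
    (t : ℝ) : StronglyMeasurable (jumpExcess ν F t) := by
  have hjoint : Continuous fun p : ℝ × ℝ => F (max (p.2 + p.1) t) - F t := by fun_prop
  exact hjoint.stronglyMeasurable.integral_prod_right'

namespace IsBoundedPrimitive

variable {F F' : ℝ → B} {C C' t h : ℝ} {ν : Measure ℝ}

lemma integrableOn_Ioi (hF : IsBoundedPrimitive F F' C C') (hν : IsSubordinatorLevyMeasure ν)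
    {a : ℝ} (ha : 0 < a) (h : ℝ) : IntegrableOn (fun r => F (r + h)) (Ioi a) ν := by
  have := hν.isFiniteMeasure_restrict_Ioi ha
  have hcont := hF.continuous
  exact Integrable.of_bound (by fun_prop) C (.of_forall fun r => hF.norm_le (r + h))

lemma norm_increment_le (hF : IsBoundedPrimitive F F' C C') {a r : ℝ} (ht : 0 ≤ t) (hat : t ≤ a)
    (har : a ≤ t + r) : ‖F a - F t‖ ≤ (2 * C + C') * min 1 r := by
  have hC : 0 ≤ C := (norm_nonneg _).trans (hF.norm_le 0)
  have hC' : 0 ≤ C' := (norm_nonneg _).trans (hF.norm_deriv_le 0)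
  have hbound : ‖F a - F t‖ ≤ 2 * C := by
    linarith [norm_sub_le (F a) (F t), hF.norm_le a, hF.norm_le t]
  have hlip : ‖F a - F t‖ ≤ C' * (a - t) := by
    rw [hF.sub_eq_integral t a ht hat, ← abs_of_nonneg (sub_nonneg.2 hat)]
    exact intervalIntegral.norm_integral_le_of_norm_le_const fun y _ => hF.norm_deriv_le y
  rcases le_total 1 r with h | h
  · rw [min_eq_left h]
    linarith
  · rw [min_eq_right h]
    nlinarith

lemma ae_norm_jump_le (hF : IsBoundedPrimitive F F' C C') (hν : IsSubordinatorLevyMeasure ν)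
    (ht : 0 ≤ t) (hht : h ≤ t) :
    ∀ᵐ r ∂ν, ‖F (max (r + h) t) - F t‖ ≤ (2 * C + C') * min 1 r := by
  filter_upwards [hν.ae_pos] with r hr
  exact hF.norm_increment_le ht (le_max_right _ _) (max_le (by linarith) (by linarith))

lemma integrable_jump (hF : IsBoundedPrimitive F F' C C') (hν : IsSubordinatorLevyMeasure ν)
    (ht : 0 ≤ t) (hht : h ≤ t) : Integrable (fun r => F (max (r + h) t) - F t) ν := by
  have hcont := hF.continuous
  exact (hν.integrable_min_one.const_mul _).mono' (by fun_prop) (hF.ae_norm_jump_le hν ht hht)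

lemma norm_jumpExcess_le (hF : IsBoundedPrimitive F F' C C') (hν : IsSubordinatorLevyMeasure ν)
    (ht : 0 ≤ t) (hht : h ≤ t) :
    ‖jumpExcess ν F t h‖ ≤ ∫ r, (2 * C + C') * min 1 r ∂ν :=
  norm_integral_le_of_norm_le (hν.integrable_min_one.const_mul _) (hF.ae_norm_jump_le hν ht hht)

lemma jump_sub_jump (hF : IsBoundedPrimitive F F' C C') (ht : 0 ≤ t) {a b : ℝ} (hab : a ≤ b)
    (r : ℝ) : F (max (r + b) t) - F (max (r + a) t) =
      ∫ h in Ioc a b, (Ioi t).indicator F' (r + h) := by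
  have hmax : max (r + a) t ≤ max (r + b) t := max_le_max_right t (by linarith)
  have hset : Ioc (max (r + a) t) (max (r + b) t) = Ioc (r + a) (r + b) ∩ Ioi t := by
    rw [Ioc_inter_Ioi]
    rcases le_total (r + b) t with h | h
    · rw [Ioc_eq_empty (by simp [h]), Ioc_eq_empty (by simp [h])]
    · rw [max_eq_left h]
  rw [hF.sub_eq_integral _ _ (ht.trans (le_max_right _ _)) hmax,
    intervalIntegral.integral_of_le hmax, hset, ← setIntegral_indicator measurableSet_Ioi,
    ← intervalIntegral.integral_of_le (by linarith), ← intervalIntegral.integral_comp_add_left,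
    intervalIntegral.integral_of_le hab]

lemma integrable_deriv_crossing (hF : IsBoundedPrimitive F F' C C')
    (hν : IsSubordinatorLevyMeasure ν) (a t : ℝ) :
    Integrable (fun p : ℝ × ℝ => (Ioi t).indicator F' (p.1 + p.2))
      (ν.prod (volume.restrict (Ioc a t))) := by
  have hS : MeasurableSet {p : ℝ × ℝ | t < p.1 + p.2} :=
    measurableSet_lt (by fun_prop) (by fun_prop)
  have hmeas : StronglyMeasurable fun p : ℝ × ℝ => F' (p.1 + p.2) :=
    hF.stronglyMeasurable_deriv.comp_measurable (by fun_prop)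
  exact (integrable_indicator_iff hS).2 (Measure.integrableOn_of_bounded
    (hν.measure_prod_crossing_lt_top a t).ne hmeas.aestronglyMeasurable
    (.of_forall fun p => hF.norm_deriv_le (p.1 + p.2)))

lemma integrableOn_jumpExcessDeriv (hF : IsBoundedPrimitive F F' C C')
    (hν : IsSubordinatorLevyMeasure ν) (a t : ℝ) :
    IntegrableOn (jumpExcessDeriv ν F' t) (Ioc a t) :=
  have := hν.sFinite
  (hF.integrable_deriv_crossing hν a t).integral_prod_right

lemma jumpExcess_sub_jumpExcess (hF : IsBoundedPrimitive F F' C C')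
    (hν : IsSubordinatorLevyMeasure ν) (ht : 0 ≤ t) {a b : ℝ} (hab : a ≤ b) (hbt : b ≤ t) :
    jumpExcess ν F t b - jumpExcess ν F t a = ∫ h in Ioc a b, jumpExcessDeriv ν F' t h := by
  have := hν.sFinite
  have hint : Integrable (fun p : ℝ × ℝ => (Ioi t).indicator F' (p.1 + p.2))
      (ν.prod (volume.restrict (Ioc a b))) :=
    (hF.integrable_deriv_crossing hν a t).mono_measure
      (Measure.prod_mono le_rfl (Measure.restrict_mono_set _ (Ioc_subset_Ioc_right hbt)))
  calc jumpExcess ν F t b - jumpExcess ν F t a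
      = ∫ r, (F (max (r + b) t) - F (max (r + a) t)) ∂ν := by
        rw [jumpExcess, jumpExcess, ← integral_sub (hF.integrable_jump hν ht hbt)
          (hF.integrable_jump hν ht (hab.trans hbt))]
        simp only [sub_sub_sub_cancel_right]
    _ = ∫ r, (∫ h in Ioc a b, (Ioi t).indicator F' (r + h)) ∂ν := by
        simp only [hF.jump_sub_jump ht hab]
    _ = ∫ h in Ioc a b, jumpExcessDeriv ν F' t h := integral_integral_swap hint

lemma setIntegral_Ioi_eq_add_jumpExcess [CompleteSpace B] (hF : IsBoundedPrimitive F F' C C')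
    (hν : IsSubordinatorLevyMeasure ν) (hht : h < t) :
    ∫ r in Ioi (t - h), F (r + h) ∂ν = ν.real (Ioi (t - h)) • F t + jumpExcess ν F t h := by
  have := hν.isFiniteMeasure_restrict_Ioi (sub_pos.2 hht)
  have hexcess : jumpExcess ν F t h = ∫ r in Ioi (t - h), (F (r + h) - F t) ∂ν := by
    rw [jumpExcess, ← setIntegral_eq_integral_of_forall_compl_eq_zero (s := Ioi (t - h))]
    · refine setIntegral_congr_fun measurableSet_Ioi fun r hr => ?_
      simp only [max_eq_left (sub_lt_iff_lt_add.1 (mem_Ioi.1 hr)).le]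
    · intro r hr
      rw [max_eq_right (by linarith [notMem_Ioi.1 hr]), sub_self]
  rw [hexcess, integral_sub (hF.integrableOn_Ioi hν (sub_pos.2 hht) h) (integrable_const _),
    setIntegral_const, add_sub_cancel]

end IsBoundedPrimitive

lemma measurable_measure_Ioi_sub (ν : Measure ℝ) (t : ℝ) :
    Measurable fun a => ν (Ioi (t - a)) :=
  Monotone.measurable fun _ _ hab => measure_mono (Ioi_subset_Ioi (sub_le_sub_left hab t))

lemma measurable_measure_Ico_sub (U : Measure ℝ) [SFinite U] :
    Measurable fun p : ℝ × ℝ => U (Ico (p.2 - p.1) p.2) := by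
  have hS : MeasurableSet
      ({q : (ℝ × ℝ) × ℝ | q.1.2 - q.1.1 ≤ q.2} ∩ {q | q.2 < q.1.2}) :=
    (measurableSet_le (by fun_prop) (by fun_prop)).inter
      (measurableSet_lt (by fun_prop) (by fun_prop))
  exact measurable_measure_prodMk_left hS

lemma lintegral_measure_Ioo_sub (U ν : Measure ℝ) [SFinite U] [SFinite ν] (t : ℝ) :
    ∫⁻ s, U (Ioo (t - s) t) ∂ν = ∫⁻ a in Iio t, ν (Ioi (t - a)) ∂U := by
  have hS : MeasurableSet {p : ℝ × ℝ | t < p.1 + p.2} :=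
    measurableSet_lt (by fun_prop) (by fun_prop)
  calc ∫⁻ s, U (Ioo (t - s) t) ∂ν
      = (ν.prod (U.restrict (Iio t))) {p | t < p.1 + p.2} := by
        rw [Measure.prod_apply hS]
        refine lintegral_congr fun s => ?_
        rw [Measure.restrict_apply (measurable_prodMk_left hS)]
        congr 1
        ext a
        simp [sub_lt_iff_lt_add']
    _ = ∫⁻ a in Iio t, ν (Ioi (t - a)) ∂U := by
        rw [Measure.prod_apply_symm hS]
        refine lintegral_congr fun a => congrArg ν ?_
        ext s
        simp [sub_lt_iff_lt_add]

/-- `U` is carried by `(0, ∞)` and solves the renewal equation of the Lévy measure `ν`; for a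
driftless subordinator this is its potential measure. -/
structure IsRenewalMeasure (U ν : Measure ℝ) : Prop where
  measure_Iic_zero : U (Iic 0) = 0
  lintegral_measure_Ioi : ∀ t, 0 < t → ∫⁻ a in Iio t, ν (Ioi (t - a)) ∂U = 1

namespace IsRenewalMeasure

variable {U ν : Measure ℝ} {s t : ℝ}

lemma ae_pos (hU : IsRenewalMeasure U ν) : ∀ᵐ a ∂U, 0 < a := by
  simpa [ae_iff, Iic] using hU.measure_Iic_zero

lemma measure_Iio_of_nonpos (hU : IsRenewalMeasure U ν) (ht : t ≤ 0) : U (Iio t) = 0 :=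
  measure_mono_null (fun _ ha => (mem_Iio.1 ha).le.trans ht) hU.measure_Iic_zero

lemma exists_pos_measure_Ioi_ne_zero (hU : IsRenewalMeasure U ν) :
    ∃ ε > 0, ν (Ioi ε) ≠ 0 := by
  by_contra! hzero
  have hone : ∫⁻ a in Iio 1, ν (Ioi (1 - a)) ∂U = 0 :=
    setLIntegral_eq_zero measurableSet_Iio fun a ha => hzero _ (sub_pos.2 ha)
  simp [hU.lintegral_measure_Ioi 1 one_pos] at hone

lemma measure_Ioo_lt_top (hU : IsRenewalMeasure U ν) {ε : ℝ} (hε : ν (Ioi ε) ≠ 0) (t : ℝ) :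
    U (Ioo (t - ε) t) < ⊤ := by
  rcases le_or_gt t 0 with ht | ht
  · rw [measure_mono_null Ioo_subset_Iio_self (hU.measure_Iio_of_nonpos ht)]
    exact ENNReal.zero_lt_top
  have hle : ν (Ioi ε) * U (Ioo (t - ε) t) ≤ 1 :=
    calc ν (Ioi ε) * U (Ioo (t - ε) t)
        = ∫⁻ _ in Ioo (t - ε) t, ν (Ioi ε) ∂U := (setLIntegral_const _ _).symm
      _ ≤ ∫⁻ a in Ioo (t - ε) t, ν (Ioi (t - a)) ∂U :=
          setLIntegral_mono (measurable_measure_Ioi_sub ν t) fun a ha =>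
            measure_mono (Ioi_subset_Ioi (by linarith [ha.1]))
      _ ≤ ∫⁻ a in Iio t, ν (Ioi (t - a)) ∂U := lintegral_mono_set Ioo_subset_Iio_self
      _ = 1 := hU.lintegral_measure_Ioi t ht
  exact ENNReal.lt_top_of_mul_ne_top_right (hle.trans_lt ENNReal.one_lt_top).ne hε

lemma isLocallyFiniteMeasure (hU : IsRenewalMeasure U ν) : IsLocallyFiniteMeasure U := by
  obtain ⟨ε, hε, hνε⟩ := hU.exists_pos_measure_Ioi_ne_zero
  refine ⟨fun a => ⟨Ioo (a + ε / 2 - ε) (a + ε / 2), ?_, hU.measure_Ioo_lt_top hνε _⟩⟩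
  exact Ioo_mem_nhds (by linarith) (by linarith)

lemma isFiniteMeasure_restrict_Iio (hU : IsRenewalMeasure U ν) (t : ℝ) :
    IsFiniteMeasure (U.restrict (Iio t)) := by
  have := hU.isLocallyFiniteMeasure
  have hle : U (Iio t) ≤ U (Iic 0) + U (Icc 0 t) :=
    (measure_mono fun a ha => (le_total a 0).imp id fun h => ⟨h, (mem_Iio.1 ha).le⟩).trans
      (measure_union_le _ _)
  rw [hU.measure_Iic_zero, zero_add] at hle
  exact isFiniteMeasure_restrict.2 (hle.trans_lt isCompact_Icc.measure_lt_top).ne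

lemma integrableOn_measureReal_Ioi (hU : IsRenewalMeasure U ν) (ht : 0 < t) :
    IntegrableOn (fun a => ν.real (Ioi (t - a))) (Iio t) U :=
  integrable_toReal_of_lintegral_ne_top (measurable_measure_Ioi_sub ν t).aemeasurable
    (by simp [hU.lintegral_measure_Ioi t ht])

lemma setIntegral_measureReal_Ioi (hU : IsRenewalMeasure U ν) (hν : IsSubordinatorLevyMeasure ν)
    (ht : 0 < t) : ∫ a in Iio t, ν.real (Ioi (t - a)) ∂U = 1 := by
  have hfin : ∀ᵐ a ∂U.restrict (Iio t), ν (Ioi (t - a)) < ⊤ := by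
    filter_upwards [ae_restrict_mem measurableSet_Iio] with a ha
    exact hν.measure_Ioi_lt_top (sub_pos.2 ha)
  simp only [Measure.real]
  rw [integral_toReal (measurable_measure_Ioi_sub ν t).aemeasurable hfin,
    hU.lintegral_measure_Ioi t ht, ENNReal.toReal_one]

lemma aemeasurable_measure_Ico (hU : IsRenewalMeasure U ν) (t : ℝ) :
    AEMeasurable (fun s => U (Ico (t - s) t)) ν :=
  have := hU.isLocallyFiniteMeasure
  ((measurable_measure_Ico_sub U).comp (measurable_id.prodMk measurable_const)).aemeasurable

lemma setIntegral_comp_min_add_sub_self [CompleteSpace B] (hU : IsRenewalMeasure U ν) {w v : ℝ → B}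
    (hv : IntegrableOn v (Ioc 0 t))
    (hwv : ∀ a b, 0 ≤ a → a ≤ b → b ≤ t → w b - w a = ∫ h in Ioc a b, v h) (hs : 0 ≤ s) :
    ∫ a in Iio t, (w (min (a + s) t) - w a) ∂U =
      ∫ h in Ioc 0 t, U.real (Ico (h - s) h) • v h := by
  have := hU.isFiniteMeasure_restrict_Iio t
  have hincrement : ∀ᵐ a ∂U.restrict (Iio t), w (min (a + s) t) - w a =
      ∫ h in Ioc 0 t, (Ioc a (a + s)).indicator v h := by
    filter_upwards [ae_restrict_mem measurableSet_Iio, ae_restrict_of_ae hU.ae_pos] with a hat ha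
    rw [hwv a _ ha.le (le_min (by linarith) (mem_Iio.1 hat).le) (min_le_right _ _),
      setIntegral_indicator measurableSet_Ioc, Ioc_inter_Ioc, max_eq_right ha.le, min_comm]
  have hslice : ∀ h ∈ Ioc 0 t, ∫ a in Iio t, (Ioc a (a + s)).indicator v h ∂U =
      U.real (Ico (h - s) h) • v h := by
    intro h hh
    have hflip (a : ℝ) : (Ioc a (a + s)).indicator v h =
        (Ico (h - s) h).indicator (fun _ => v h) a := by
      simp only [indicator, mem_Ioc, mem_Ico, sub_le_iff_le_add, and_comm]
    simp only [hflip]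
    rw [integral_indicator_const _ measurableSet_Ico,
      measureReal_restrict_apply measurableSet_Ico,
      inter_eq_left.2 fun a ha => ha.2.trans_le hh.2]
  have hint : Integrable (Function.uncurry fun a h => (Ioc a (a + s)).indicator v h)
      ((U.restrict (Iio t)).prod (volume.restrict (Ioc 0 t))) := by
    have hS : MeasurableSet ({p : ℝ × ℝ | p.1 < p.2} ∩ {p | p.2 ≤ p.1 + s}) :=
      (measurableSet_lt (by fun_prop) (by fun_prop)).inter
        (measurableSet_le (by fun_prop) (by fun_prop))
    exact (hv.comp_snd (U.restrict (Iio t))).indicator hS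
  rw [integral_congr_ae hincrement, integral_integral_swap hint]
  exact setIntegral_congr_fun measurableSet_Ioc hslice

lemma setIntegral_comp_add_sub_setIntegral [CompleteSpace B] (hU : IsRenewalMeasure U ν)
    {w : ℝ → B} {K : ℝ} (hw : StronglyMeasurable w) (hwK : ∀ h ≤ t, ‖w h‖ ≤ K) (hs : 0 ≤ s) :
    (∫ a in Iio (t - s), w (a + s) ∂U) - ∫ a in Iio t, w a ∂U =
      (∫ a in Iio t, (w (min (a + s) t) - w a) ∂U) - U.real (Ico (t - s) t) • w t := by
  have := hU.isFiniteMeasure_restrict_Iio t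
  have hshift : IntegrableOn (fun a => w (min (a + s) t)) (Iio t) U :=
    Integrable.of_bound (hw.comp_measurable (by fun_prop)).aestronglyMeasurable K
      (.of_forall fun a => hwK _ (min_le_right _ _))
  have hint : IntegrableOn w (Iio t) U :=
    Integrable.of_bound hw.aestronglyMeasurable K <| by
      filter_upwards [ae_restrict_mem measurableSet_Iio] with a ha using hwK a (mem_Iio.1 ha).le
  have hbelow : ∫ a in Iio (t - s), w (min (a + s) t) ∂U = ∫ a in Iio (t - s), w (a + s) ∂U :=
    setIntegral_congr_fun measurableSet_Iio fun a ha =>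
      congrArg w (min_eq_left (by linarith [mem_Iio.1 ha]))
  have habove : ∫ a in Ico (t - s) t, w (min (a + s) t) ∂U = U.real (Ico (t - s) t) • w t := by
    rw [← setIntegral_const]
    exact setIntegral_congr_fun measurableSet_Ico fun a ha =>
      congrArg w (min_eq_right (by linarith [ha.1]))
  have hsplit : ∫ a in Iio t, w (min (a + s) t) ∂U =
      (∫ a in Iio (t - s), w (a + s) ∂U) + U.real (Ico (t - s) t) • w t := by
    rw [← hbelow, ← habove, ← setIntegral_union _ measurableSet_Ico
      (hshift.mono_set (Iio_subset_Iio (sub_le_self t hs)))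
      (hshift.mono_set Ico_subset_Iio_self), Iio_union_Ico_eq_Iio (sub_le_self t hs)]
    exact disjoint_left.2 fun a ha hmem => hmem.1.not_gt ha
  rw [integral_sub hshift hint, hsplit]
  abel

variable [NullSingletonClass U]

lemma lintegral_measure_Ico (hU : IsRenewalMeasure U ν) [SFinite ν] (ht : 0 < t) :
    ∫⁻ s, U (Ico (t - s) t) ∂ν = 1 := by
  have := hU.isLocallyFiniteMeasure
  rw [← hU.lintegral_measure_Ioi t ht, ← lintegral_measure_Ioo_sub]
  exact lintegral_congr fun s => measure_congr Ioo_ae_eq_Ico.symm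

lemma integrable_measureReal_Ico (hU : IsRenewalMeasure U ν) [SFinite ν] (ht : 0 < t) :
    Integrable (fun s => U.real (Ico (t - s) t)) ν :=
  integrable_toReal_of_lintegral_ne_top (hU.aemeasurable_measure_Ico t)
    (by simp [hU.lintegral_measure_Ico ht])

lemma integral_measureReal_Ico (hU : IsRenewalMeasure U ν) [SFinite ν] (ht : 0 < t) :
    ∫ s, U.real (Ico (t - s) t) ∂ν = 1 := by
  have hone := hU.lintegral_measure_Ico ht
  simp only [Measure.real]
  rw [integral_toReal (hU.aemeasurable_measure_Ico t), hone, ENNReal.toReal_one]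
  exact ae_lt_top' (hU.aemeasurable_measure_Ico t) (by simp [hone])

lemma integrable_measureReal_Ico_smul (hU : IsRenewalMeasure U ν) [SFinite ν] {v : ℝ → B}
    (hv : IntegrableOn v (Ioc 0 t)) :
    Integrable (fun p : ℝ × ℝ => U.real (Ico (p.2 - p.1) p.2) • v p.2)
      (ν.prod (volume.restrict (Ioc 0 t))) := by
  have := hU.isLocallyFiniteMeasure
  have hmeas : AEStronglyMeasurable (fun p : ℝ × ℝ => U.real (Ico (p.2 - p.1) p.2) • v p.2)
      (ν.prod (volume.restrict (Ioc 0 t))) :=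
    (measurable_measure_Ico_sub U).ennreal_toReal.aestronglyMeasurable.smul
      hv.aestronglyMeasurable.comp_snd
  refine (integrable_prod_iff' hmeas).2 ⟨?_, hv.norm.congr ?_⟩
  · filter_upwards [ae_restrict_mem measurableSet_Ioc] with h hh
    exact (hU.integrable_measureReal_Ico hh.1).smul_const (v h)
  · filter_upwards [ae_restrict_mem measurableSet_Ioc] with h hh
    simp only [norm_smul, Real.norm_of_nonneg measureReal_nonneg]
    rw [integral_mul_const, hU.integral_measureReal_Ico hh.1, one_mul]

lemma integral_setIntegral_measureReal_Ico_smul [CompleteSpace B] (hU : IsRenewalMeasure U ν)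
    [SFinite ν] {v : ℝ → B} (hv : IntegrableOn v (Ioc 0 t)) :
    ∫ s, (∫ h in Ioc 0 t, U.real (Ico (h - s) h) • v h) ∂ν = ∫ h in Ioc 0 t, v h := by
  rw [integral_integral_swap (hU.integrable_measureReal_Ico_smul hv)]
  refine setIntegral_congr_fun measurableSet_Ioc fun h hh => ?_
  refine (integral_smul_const _ _).trans ?_
  rw [hU.integral_measureReal_Ico hh.1, one_smul]

end IsRenewalMeasure

namespace IsBoundedPrimitive

variable {F F' : ℝ → B} {C C' t : ℝ} {U ν : Measure ℝ}

lemma integrableOn_jumpExcess (hF : IsBoundedPrimitive F F' C C')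
    (hν : IsSubordinatorLevyMeasure ν) (hU : IsRenewalMeasure U ν) (ht : 0 ≤ t) :
    IntegrableOn (jumpExcess ν F t) (Iio t) U := by
  have := hν.sFinite
  have := hU.isFiniteMeasure_restrict_Iio t
  refine Integrable.of_bound
    (stronglyMeasurable_jumpExcess ν hF.continuous t).aestronglyMeasurable
    (∫ r, (2 * C + C') * min 1 r ∂ν) ?_
  filter_upwards [ae_restrict_mem measurableSet_Iio] with h hh
  exact hF.norm_jumpExcess_le hν ht (mem_Iio.1 hh).le

variable [CompleteSpace B]

lemma setIntegral_setIntegral_Ioi (hF : IsBoundedPrimitive F F' C C')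
    (hν : IsSubordinatorLevyMeasure ν) (hU : IsRenewalMeasure U ν) (ht : 0 < t) :
    ∫ h in Iio t, (∫ r in Ioi (t - h), F (r + h) ∂ν) ∂U = firstPassageMean ν U F t 0 := by
  rw [firstPassageMean_zero ν U F ht.le, setIntegral_congr_fun measurableSet_Iio
      fun _ hh => hF.setIntegral_Ioi_eq_add_jumpExcess hν hh,
    integral_add ((hU.integrableOn_measureReal_Ioi ht).smul_const (F t))
      (hF.integrableOn_jumpExcess hν hU ht.le),
    integral_smul_const, hU.setIntegral_measureReal_Ioi hν ht, one_smul]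

lemma firstPassageMean_sub_firstPassageMean_zero (hF : IsBoundedPrimitive F F' C C')
    (hν : IsSubordinatorLevyMeasure ν) (hU : IsRenewalMeasure U ν) (ht : 0 ≤ t) {s : ℝ}
    (hs : 0 ≤ s) :
    firstPassageMean ν U F t s - firstPassageMean ν U F t 0 =
      F (max s t) - F t - U.real (Ico (t - s) t) • jumpExcess ν F t t +
        ∫ h in Ioc 0 t, U.real (Ico (h - s) h) • jumpExcessDeriv ν F' t h := by
  have := hν.sFinite
  rw [firstPassageMean_zero ν U F ht, firstPassageMean,
    ← hU.setIntegral_comp_min_add_sub_self (hF.integrableOn_jumpExcessDeriv hν 0 t)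
      (fun a b _ hab hbt => hF.jumpExcess_sub_jumpExcess hν ht hab hbt) hs, add_sub_add_comm,
    hU.setIntegral_comp_add_sub_setIntegral (stronglyMeasurable_jumpExcess ν hF.continuous t)
      (fun h hh => hF.norm_jumpExcess_le hν ht hh) hs]
  abel

variable [NullSingletonClass U]

theorem integrable_and_integral_firstPassageMean_sub_eq_zero (hF : IsBoundedPrimitive F F' C C')
    (hν : IsSubordinatorLevyMeasure ν) (hU : IsRenewalMeasure U ν) (ht : 0 < t) :
    Integrable (fun s => firstPassageMean ν U F t s - firstPassageMean ν U F t 0) ν ∧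
      ∫ s, (firstPassageMean ν U F t s - firstPassageMean ν U F t 0) ∂ν = 0 := by
  have := hν.sFinite
  have hdefect := hν.ae_pos.mono fun s hs =>
    hF.firstPassageMean_sub_firstPassageMean_zero hν hU ht.le hs.le
  have hv := hF.integrableOn_jumpExcessDeriv hν 0 t
  have hjump : Integrable (fun s => F (max s t) - F t) ν := by
    simpa only [add_zero] using hF.integrable_jump hν ht.le ht.le
  have hmass : Integrable (fun s => U.real (Ico (t - s) t) • jumpExcess ν F t t) ν :=
    (hU.integrable_measureReal_Ico ht).smul_const _
  have hdiff : Integrable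
      (fun s => F (max s t) - F t - U.real (Ico (t - s) t) • jumpExcess ν F t t) ν :=
    hjump.sub hmass
  have hprim : Integrable
      (fun s => ∫ h in Ioc 0 t, U.real (Ico (h - s) h) • jumpExcessDeriv ν F' t h) ν :=
    (hU.integrable_measureReal_Ico_smul hv).integral_prod_left
  have hmass_integral : ∫ s, U.real (Ico (t - s) t) • jumpExcess ν F t t ∂ν =
      jumpExcess ν F t t := by
    rw [integral_smul_const, hU.integral_measureReal_Ico ht, one_smul]
  have hprim_integral :
      ∫ s, (∫ h in Ioc 0 t, U.real (Ico (h - s) h) • jumpExcessDeriv ν F' t h) ∂ν =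
        jumpExcess ν F t t - jumpExcess ν F t 0 := by
    rw [hU.integral_setIntegral_measureReal_Ico_smul hv,
      hF.jumpExcess_sub_jumpExcess hν ht.le ht.le le_rfl]
  refine ⟨(hdiff.add hprim).congr (hdefect.mono fun _ => Eq.symm), ?_⟩
  rw [integral_congr_ae hdefect, integral_add hdiff hprim, integral_sub hjump hmass,
    hmass_integral, hprim_integral, jumpExcess_zero]
  abel

end IsBoundedPrimitive

/-- A strongly continuous semigroup on `[0, ∞)` of operators of norm at most `M`. Operators
at negative times are unconstrained. -/
structure IsBoundedSemigroup (P : ℝ → B →L[ℝ] B) (M : ℝ) : Prop where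
  apply_zero : P 0 = .id ℝ B
  apply_add : ∀ s t, 0 ≤ s → 0 ≤ t → P (s + t) = (P s).comp (P t)
  norm_apply_le : ∀ t, 0 ≤ t → ∀ f, ‖P t f‖ ≤ M * ‖f‖
  continuousWithinAt_zero : ∀ f, ContinuousWithinAt (fun t => P t f) (Ici 0) 0

/-- The orbit `r ↦ P r u`, extended by `P 0 u` to negative times so that it is continuous on `ℝ`. -/
noncomputable def semigroupOrbit (P : ℝ → B →L[ℝ] B) (u : B) (r : ℝ) : B :=
  P (max r 0) u

lemma semigroupOrbit_of_nonneg (P : ℝ → B →L[ℝ] B) (u : B) {r : ℝ} (hr : 0 ≤ r) :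
    semigroupOrbit P u r = P r u := by
  rw [semigroupOrbit, max_eq_left hr]

/-- The overshoot average `E[P_{D_t} u]`, for a subordinator with Lévy measure `ν` and potential
measure `U`: it jumps across the level `t` from `h` with a jump of size `r`, and `P (r + h)` is
applied at the point it reaches. -/
noncomputable def overshootMean (P : ℝ → B →L[ℝ] B) (ν U : Measure ℝ) (u : B) (t : ℝ) : B :=
  if t = 0 then u else ∫ h in Iio t, (∫ r in Ioi (t - h), P (r + h) u ∂ν) ∂U

namespace IsBoundedSemigroup

variable {P : ℝ → B →L[ℝ] B} {M : ℝ} {u Gu : B}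

lemma norm_apply_sub_apply_le (hP : IsBoundedSemigroup P M) (u : B) {a b : ℝ} (ha : 0 ≤ a)
    (hab : a ≤ b) : ‖P b u - P a u‖ ≤ M * ‖P (b - a) u - u‖ := by
  have hsplit : P b u = P a (P (b - a) u) := by
    rw [← ContinuousLinearMap.comp_apply, ← hP.apply_add a (b - a) ha (sub_nonneg.2 hab),
      add_sub_cancel]
  rw [hsplit, ← map_sub]
  exact hP.norm_apply_le a ha _

lemma norm_semigroupOrbit_sub_le (hP : IsBoundedSemigroup P M) (u : B) (a b : ℝ) :
    ‖semigroupOrbit P u b - semigroupOrbit P u a‖ ≤ M * ‖P |max b 0 - max a 0| u - u‖ := by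
  rcases le_total (max a 0) (max b 0) with h | h
  · rw [abs_of_nonneg (sub_nonneg.2 h)]
    exact hP.norm_apply_sub_apply_le u (le_max_right _ _) h
  · rw [abs_of_nonpos (sub_nonpos.2 h), neg_sub, norm_sub_rev]
    exact hP.norm_apply_sub_apply_le u (le_max_right _ _) h

lemma continuous_semigroupOrbit (hP : IsBoundedSemigroup P M) (u : B) :
    Continuous (semigroupOrbit P u) := by
  refine continuous_iff_continuousAt.2 fun r => tendsto_iff_norm_sub_tendsto_zero.2 ?_
  have habs : Tendsto (fun z => |max z 0 - max r 0|) (𝓝 r) (𝓝[≥] 0) :=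
    tendsto_nhdsWithin_iff.2
      ⟨Continuous.tendsto' (by fun_prop) _ _ (by simp),
        .of_forall fun _ => mem_Ici.2 (abs_nonneg _)⟩
  have hzero : Tendsto (fun z => M * ‖P |max z 0 - max r 0| u - u‖) (𝓝 r) (𝓝 0) := by
    simpa [hP.apply_zero] using
      ((((hP.continuousWithinAt_zero u).tendsto.comp habs).sub_const u).norm.const_mul M)
  exact squeeze_zero (fun _ => norm_nonneg _) (hP.norm_semigroupOrbit_sub_le u r) hzero

lemma apply_semigroupOrbit (hP : IsBoundedSemigroup P M) (u : B) {s r : ℝ} (hs : 0 ≤ s)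
    (hr : 0 ≤ r) : P s (semigroupOrbit P u r) = semigroupOrbit P u (r + s) := by
  rw [semigroupOrbit_of_nonneg P u hr, semigroupOrbit_of_nonneg P u (add_nonneg hr hs), add_comm,
    hP.apply_add s r hs hr, ContinuousLinearMap.comp_apply]

lemma hasDerivWithinAt_semigroupOrbit (hP : IsBoundedSemigroup P M)
    (hu : Tendsto (fun h : ℝ => h⁻¹ • (P h u - u)) (𝓝[>] 0) (𝓝 Gu)) {y : ℝ} (hy : 0 ≤ y) :
    HasDerivWithinAt (semigroupOrbit P u) (semigroupOrbit P Gu y) (Ioi y) y := by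
  have hshift : Tendsto (fun z => z - y) (𝓝[>] y) (𝓝[>] 0) :=
    tendsto_nhdsWithin_iff.2
      ⟨((continuous_sub_right y).tendsto' y 0 (sub_self y)).mono_left nhdsWithin_le_nhds,
        eventually_mem_nhdsWithin.mono fun _ hz => mem_Ioi.2 (sub_pos.2 hz)⟩
  rw [hasDerivWithinAt_iff_tendsto_slope' self_notMem_Ioi, semigroupOrbit_of_nonneg P Gu hy]
  refine (((P y).continuous.tendsto Gu).comp (hu.comp hshift)).congr' ?_
  filter_upwards [self_mem_nhdsWithin] with z hz
  have hyz : 0 ≤ z - y := sub_nonneg.2 (mem_Ioi.1 hz).le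
  have horbit : P y (P (z - y) u) = semigroupOrbit P u z := by
    rw [← semigroupOrbit_of_nonneg P u hyz, hP.apply_semigroupOrbit u hy hyz, sub_add_cancel]
  simp only [Function.comp_apply, map_smul, map_sub, horbit, slope_def_module,
    semigroupOrbit_of_nonneg P u hy]

lemma isBoundedPrimitive_semigroupOrbit [CompleteSpace B] (hP : IsBoundedSemigroup P M)
    (hu : Tendsto (fun h : ℝ => h⁻¹ • (P h u - u)) (𝓝[>] 0) (𝓝 Gu)) :
    IsBoundedPrimitive (semigroupOrbit P u) (semigroupOrbit P Gu) (M * ‖u‖) (M * ‖Gu‖) where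
  continuous := hP.continuous_semigroupOrbit u
  stronglyMeasurable_deriv := (hP.continuous_semigroupOrbit Gu).stronglyMeasurable
  norm_le _ := hP.norm_apply_le _ (le_max_right _ _) u
  norm_deriv_le _ := hP.norm_apply_le _ (le_max_right _ _) Gu
  sub_eq_integral a b ha hab :=
    (intervalIntegral.integral_eq_sub_of_hasDeriv_right_of_le hab
      (hP.continuous_semigroupOrbit u).continuousOn
      (fun _ hy => hP.hasDerivWithinAt_semigroupOrbit hu (ha.trans hy.1.le))
      ((hP.continuous_semigroupOrbit Gu).intervalIntegrable a b)).symm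

variable [CompleteSpace B] {ν U : Measure ℝ} {s t : ℝ}

lemma apply_jumpExcess (hP : IsBoundedSemigroup P M) (hν : IsSubordinatorLevyMeasure ν)
    (hu : Tendsto (fun h : ℝ => h⁻¹ • (P h u - u)) (𝓝[>] 0) (𝓝 Gu)) (hs : 0 ≤ s) (ht : 0 ≤ t)
    {h : ℝ} (hht : h ≤ t) :
    P s (jumpExcess ν (semigroupOrbit P u) t h) =
      jumpExcess ν (semigroupOrbit P u) (t + s) (h + s) := by
  have hint := (hP.isBoundedPrimitive_semigroupOrbit hu).integrable_jump hν ht hht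
  rw [jumpExcess, ← (P s).integral_comp_comm hint]
  refine integral_congr_ae (.of_forall fun r => ?_)
  simp only [map_sub, hP.apply_semigroupOrbit u hs (ht.trans (le_max_right (r + h) t)),
    hP.apply_semigroupOrbit u hs ht, ← add_assoc, max_add_add_right]

lemma overshootMean_of_pos (hP : IsBoundedSemigroup P M) (hν : IsSubordinatorLevyMeasure ν)
    (hU : IsRenewalMeasure U ν)
    (hu : Tendsto (fun h : ℝ => h⁻¹ • (P h u - u)) (𝓝[>] 0) (𝓝 Gu)) (ht : 0 < t) :
    overshootMean P ν U u t = firstPassageMean ν U (semigroupOrbit P u) t 0 := by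
  rw [overshootMean, if_neg ht.ne',
    ← (hP.isBoundedPrimitive_semigroupOrbit hu).setIntegral_setIntegral_Ioi hν hU ht]
  refine integral_congr_ae (.of_forall fun h => setIntegral_congr_fun measurableSet_Ioi ?_)
  intro r hr
  exact (semigroupOrbit_of_nonneg P u (ht.le.trans (sub_lt_iff_lt_add.1 (mem_Ioi.1 hr)).le)).symm

lemma apply_overshootMean (hP : IsBoundedSemigroup P M) (hν : IsSubordinatorLevyMeasure ν)
    (hU : IsRenewalMeasure U ν)
    (hu : Tendsto (fun h : ℝ => h⁻¹ • (P h u - u)) (𝓝[>] 0) (𝓝 Gu)) (hs : 0 ≤ s) (t : ℝ) :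
    P s (overshootMean P ν U u (max (t - s) 0)) =
      firstPassageMean ν U (semigroupOrbit P u) t s := by
  rcases lt_or_ge s t with hst | hts
  · have hpos := sub_pos.2 hst
    have hint := (hP.isBoundedPrimitive_semigroupOrbit hu).integrableOn_jumpExcess hν hU hpos.le
    rw [max_eq_left hpos.le, hP.overshootMean_of_pos hν hU hu hpos,
      firstPassageMean_zero ν U _ hpos.le, firstPassageMean, max_eq_right hst.le, map_add,
      hP.apply_semigroupOrbit u hs hpos.le, ← (P s).integral_comp_comm hint, sub_add_cancel]
    congr 1
    refine setIntegral_congr_fun measurableSet_Iio fun h hh => ?_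
    simp only [hP.apply_jumpExcess hν hu hs hpos.le (mem_Iio.1 hh).le, sub_add_cancel]
  · rw [firstPassageMean, Measure.restrict_eq_zero.2 (hU.measure_Iio_of_nonpos (sub_nonpos.2 hts)),
      integral_zero_measure, add_zero, max_eq_right (sub_nonpos.2 hts), max_eq_left hts,
      semigroupOrbit_of_nonneg P u hs, overshootMean, if_pos rfl]

end IsBoundedSemigroup

theorem ctrw_overshoot_existence_general [CompleteSpace B] {P : ℝ → B →L[ℝ] B} {M : ℝ}
    (hP : IsBoundedSemigroup P M) {ν U : Measure ℝ} (hν : IsSubordinatorLevyMeasure ν)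
    (hU : IsRenewalMeasure U ν) [NullSingletonClass U] {u Gu : B}
    (hu : Tendsto (fun h : ℝ => h⁻¹ • (P h u - u)) (𝓝[>] 0) (𝓝 Gu)) :
    (∀ t, 0 < t →
      Integrable
        (fun s => P s (overshootMean P ν U u (max (t - s) 0)) - overshootMean P ν U u t) ν ∧
      ∫ s, (P s (overshootMean P ν U u (max (t - s) 0)) - overshootMean P ν U u t) ∂ν = 0) ∧
    overshootMean P ν U u 0 = u := by
  refine ⟨fun t ht => ?_, if_pos rfl⟩
  have hF := hP.isBoundedPrimitive_semigroupOrbit hu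
  obtain ⟨hint, hzero⟩ := hF.integrable_and_integral_firstPassageMean_sub_eq_zero hν hU ht
  rw [← hP.overshootMean_of_pos hν hU hu ht] at hint hzero
  have hdefect := hν.ae_pos.mono fun s hs =>
    congrArg (· - overshootMean P ν U u t) (hP.apply_overshootMean hν hU hu hs.le t)
  exact ⟨hint.congr (hdefect.mono fun _ => Eq.symm), (integral_congr_ae hdefect).trans hzero⟩

lemma isSubordinatorLevyMeasure_restrict_Ioi {ν : Measure ℝ}
    (hν : ∫⁻ s in Ioi (0 : ℝ), ENNReal.ofReal (min 1 s) ∂ν ≠ ⊤) :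
    IsSubordinatorLevyMeasure (ν.restrict (Ioi 0)) :=
  ⟨ae_restrict_mem measurableSet_Ioi, hν⟩

/-- The measure on `(0, ∞)` with density `uφ`, encoded as a measure on `ℝ`. -/
noncomputable def renewalMeasureOfDensity (uφ : ℝ → ℝ) : Measure ℝ :=
  (volume.restrict (Ioi 0)).withDensity fun h => ENNReal.ofReal (uφ h)

instance nullSingletonClass_renewalMeasureOfDensity (uφ : ℝ → ℝ) :
    NullSingletonClass (renewalMeasureOfDensity uφ) := by
  unfold renewalMeasureOfDensity
  infer_instance

lemma restrict_Ioi_zero_restrict_Ioi (ν : Measure ℝ) {a : ℝ} (ha : 0 ≤ a) :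
    (ν.restrict (Ioi 0)).restrict (Ioi a) = ν.restrict (Ioi a) :=
  Measure.restrict_restrict_of_subset (Ioi_subset_Ioi ha)

lemma restrict_Iio_renewalMeasureOfDensity (uφ : ℝ → ℝ) (t : ℝ) :
    (renewalMeasureOfDensity uφ).restrict (Iio t) =
      (volume.restrict (Ioo 0 t)).withDensity fun h => ENNReal.ofReal (uφ h) := by
  rw [renewalMeasureOfDensity, restrict_withDensity measurableSet_Iio,
    Measure.restrict_restrict measurableSet_Iio, inter_comm, Ioi_inter_Iio]

lemma isRenewalMeasure_renewalMeasureOfDensity {ν : Measure ℝ} {uφ : ℝ → ℝ}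
    (huφ : Measurable uφ)
    (hrenew : ∀ t : ℝ, 0 < t →
      ∫⁻ h in Ioo 0 t, ν (Ioi (t - h)) * ENNReal.ofReal (uφ h) = 1) :
    IsRenewalMeasure (renewalMeasureOfDensity uφ) (ν.restrict (Ioi 0)) where
  measure_Iic_zero := by
    refine withDensity_absolutelyContinuous _ _ ?_
    rw [Measure.restrict_apply measurableSet_Iic, Iic_inter_Ioi, Ioc_self, measure_empty]
  lintegral_measure_Ioi t ht := by
    rw [restrict_Iio_renewalMeasureOfDensity, lintegral_withDensity_eq_lintegral_mul _
      (by fun_prop) (measurable_measure_Ioi_sub _ t), ← hrenew t ht]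
    refine setLIntegral_congr_fun measurableSet_Ioo fun h hh => ?_
    rw [Pi.mul_apply, mul_comm, Measure.restrict_apply measurableSet_Ioi,
      inter_eq_left.2 (Ioi_subset_Ioi (sub_nonneg.2 hh.2.le))]

lemma setIntegral_Iio_renewalMeasureOfDensity {uφ : ℝ → ℝ} (huφ : Measurable uφ)
    (huφ0 : ∀ t : ℝ, 0 < t → 0 ≤ uφ t) (f : ℝ → B) (t : ℝ) :
    ∫ h in Iio t, f h ∂renewalMeasureOfDensity uφ = ∫ h in Ioo 0 t, uφ h • f h := by
  rw [restrict_Iio_renewalMeasureOfDensity, integral_withDensity_eq_integral_toReal_smul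
    (by fun_prop) (.of_forall fun _ => ENNReal.ofReal_lt_top)]
  refine setIntegral_congr_fun measurableSet_Ioo fun h hh => ?_
  simp only [ENNReal.toReal_ofReal (huφ0 h hh.1)]

end BanachSpace

section ZeroAtInfty

variable {E : Type*} [TopologicalSpace E]

lemma cand_eq_overshootMean (P : ℝ → C₀(E, ℝ) →L[ℝ] C₀(E, ℝ)) (ν : Measure ℝ) {uφ : ℝ → ℝ}
    (huφ : Measurable uφ) (huφ0 : ∀ t : ℝ, 0 < t → 0 ≤ uφ t) (u : C₀(E, ℝ)) (t : ℝ) :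
    cand P ν uφ u t =
      overshootMean P (ν.restrict (Ioi 0)) (renewalMeasureOfDensity uφ) u t := by
  rw [cand, overshootMean, setIntegral_Iio_renewalMeasureOfDensity huφ huφ0]
  congr 1
  refine setIntegral_congr_fun measurableSet_Ioo fun h hh => ?_
  simp only [restrict_Ioi_zero_restrict_Ioi ν (sub_nonneg.2 hh.2.le)]

/-- Evaluation at `x` as a continuous linear functional on `C₀(E, ℝ)`. -/
noncomputable def zeroAtInftyEvalCLM (x : E) : C₀(E, ℝ) →L[ℝ] ℝ :=
  LinearMap.mkContinuous
    { toFun := fun f => f x, map_add' := fun _ _ => rfl, map_smul' := fun _ _ => rfl } 1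
    fun f => by
      rw [one_mul, ← ZeroAtInftyContinuousMap.norm_toBCF_eq_norm]
      exact f.toBCF.norm_coe_le_norm x

end ZeroAtInfty

/-- Main theorem, existence part: `q(x,t) = Q(t)(x)` solves the generalized harmonic problem
`𝔄⁺q = 0` on `E × (0,∞)` (the defining integral converging absolutely) with initial
condition `Q(0) = u`. -/
theorem ctrw_overshoot_existence
    {E : Type*} [MetricSpace E] [TopologicalSpace.SeparableSpace E] [LocallyCompactSpace E]
    (P : ℝ → C₀(E, ℝ) →L[ℝ] C₀(E, ℝ))
    (hP0 : P 0 = ContinuousLinearMap.id ℝ C₀(E, ℝ))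
    (hPsg : ∀ s t : ℝ, 0 ≤ s → 0 ≤ t → P (s + t) = (P s).comp (P t))
    (hPpos : ∀ t : ℝ, 0 ≤ t → ∀ f : C₀(E, ℝ), (∀ x, 0 ≤ f x) → ∀ x, 0 ≤ P t f x)
    (hPcon : ∀ t : ℝ, 0 ≤ t → ∀ f : C₀(E, ℝ), ‖P t f‖ ≤ ‖f‖)
    (hPsc : ∀ f : C₀(E, ℝ), Tendsto (fun t => P t f) (𝓝[≥] (0 : ℝ)) (𝓝 f))
    (ν : Measure ℝ)
    (hν1 : ∫⁻ s in Set.Ioi (0 : ℝ), ENNReal.ofReal (min 1 s) ∂ν ≠ ⊤)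
    (hνinf : ν (Set.Ioi (0 : ℝ)) = ⊤)
    (hνpos : ∀ t : ℝ, 0 < t → 0 < ν (Set.Ioi t))
    (uφ : ℝ → ℝ) (huφm : Measurable uφ)
    (huφ0 : ∀ t : ℝ, 0 < t → 0 ≤ uφ t)
    (huφmono : ∀ s t : ℝ, 0 < s → s ≤ t → uφ t ≤ uφ s)
    (hrenew : ∀ t : ℝ, 0 < t →
      ∫⁻ h in Set.Ioo 0 t, ν (Set.Ioi (t - h)) * ENNReal.ofReal (uφ h) = 1)
    (hlog : ∫⁻ t in Set.Ioo (0 : ℝ) 1, ENNReal.ofReal (|Real.log t| * uφ t) ≠ ⊤)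
    (u Gu : C₀(E, ℝ))
    (hu : Tendsto (fun h : ℝ => h⁻¹ • (P h u - u)) (𝓝[>] (0 : ℝ)) (𝓝 Gu)) :
    (∀ (x : E) (t : ℝ), 0 < t →
      IntegrableOn
        (fun s : ℝ => (P s (cand P ν uφ u (max (t - s) 0))) x - (cand P ν uφ u t) x)
        (Set.Ioi 0) ν ∧
      ∫ s in Set.Ioi (0 : ℝ),
        ((P s (cand P ν uφ u (max (t - s) 0))) x - (cand P ν uφ u t) x) ∂ν = 0) ∧
    cand P ν uφ u 0 = u := by
  have hP : IsBoundedSemigroup P 1 :=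
    ⟨hP0, hPsg, fun t ht f => (hPcon t ht f).trans_eq (one_mul _).symm,
      fun f => by simpa [ContinuousWithinAt, hP0] using hPsc f⟩
  obtain ⟨hdefect, hinit⟩ := ctrw_overshoot_existence_general hP
    (isSubordinatorLevyMeasure_restrict_Ioi hν1)
    (isRenewalMeasure_renewalMeasureOfDensity huφm hrenew) hu
  simp only [cand_eq_overshootMean P ν huφm huφ0]
  refine ⟨fun x t ht => ?_, hinit⟩
  obtain ⟨hint, hzero⟩ := hdefect t ht
  exact ⟨(zeroAtInftyEvalCLM x).integrable_comp hint,
    ((zeroAtInftyEvalCLM x).integral_comp_comm hint).trans (by rw [hzero, map_zero])⟩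
end
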